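/- Let P be a simple polygon with counterclockwise vertex order. Then the interior of the kernel of P equals the intersection of Wedge(v) over all strictly convex vertices v of P. -/

import Mathlib

open scoped BigOperators

/-- Points in the plane. -/
abbrev Pt := ℝ × ℝ

/-- 2×2 determinant (cross product) of two plane vectors. -/
noncomputable def det2 (p q : Pt) : ℝ := p.1 * q.2 - p.2 * q.1

/-- Open half-plane strictly to the left of the directed line from `p` to `q`. -/
def Lhp (p q : Pt) : Set Pt := {x | 0 < det2 (q - p) (x - p)}

/-- Open half-plane strictly to the right of the directed line from `p` to `q`. -/
def Rhp (p q : Pt) : Set Pt := {x | det2 (q - p) (x - p) < 0}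

/-- The boundary of the polygon with vertices `v 0, …, v (n-1)`:
the union of its (cyclically consecutive) edges. -/
def polyBoundary {n : ℕ} [NeZero n] (v : Fin n → Pt) : Set Pt :=
  ⋃ i : Fin n, segment ℝ (v i) (v (i + 1))

/-- `v` describes a simple polygon: at least 3 distinct vertices, and two distinct
edges may only meet at a common endpoint. -/
def IsSimplePolygon {n : ℕ} [NeZero n] (v : Fin n → Pt) : Prop :=
  3 ≤ n ∧ Function.Injective v ∧
    ∀ i j : Fin n, i ≠ j →
      segment ℝ (v i) (v (i + 1)) ∩ segment ℝ (v j) (v (j + 1)) ⊆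
        ({v i, v (i + 1)} ∩ {v j, v (j + 1)} : Set Pt)

/-- The interior of the polygon: the union of the bounded connected components of the
complement of the boundary. -/
def polyInterior {n : ℕ} [NeZero n] (v : Fin n → Pt) : Set Pt :=
  {x | x ∉ polyBoundary v ∧
    Bornology.IsBounded (connectedComponentIn (polyBoundary v)ᶜ x)}

/-- The (closed) polygonal region: interior together with boundary. -/
def polyRegion {n : ℕ} [NeZero n] (v : Fin n → Pt) : Set Pt :=
  polyBoundary v ∪ polyInterior v

/-- Twice the signed area of the polygon. -/
noncomputable def signedArea2 {n : ℕ} [NeZero n] (v : Fin n → Pt) : ℝ :=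
  ∑ i : Fin n, det2 (v i) (v (i + 1))

/-- The vertices are listed in counterclockwise order. -/
def IsCCW {n : ℕ} [NeZero n] (v : Fin n → Pt) : Prop := 0 < signedArea2 v

/-- The vertex `v i` of a counterclockwise polygon is strictly convex
(interior angle strictly less than 180°). -/
def StrictlyConvexAt {n : ℕ} [NeZero n] (v : Fin n → Pt) (i : Fin n) : Prop :=
  0 < det2 (v i - v (i - 1)) (v (i + 1) - v i)

/-- The vertex `v i` of a counterclockwise polygon is reflex
(interior angle greater than or equal to 180°). -/
def ReflexAt {n : ℕ} [NeZero n] (v : Fin n → Pt) (i : Fin n) : Prop :=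
  det2 (v i - v (i - 1)) (v (i + 1) - v i) ≤ 0

/-- The wedge of vertex `v i`:  `L(v⁻, v) ∩ R(v⁺, v) ∩ interior P`. -/
def Wedge {n : ℕ} [NeZero n] (v : Fin n → Pt) (i : Fin n) : Set Pt :=
  Lhp (v (i - 1)) (v i) ∩ Rhp (v (i + 1)) (v i) ∩ polyInterior v

/-- `x` sees `y` inside the polygon `v`: the segment `xy` is contained in the region. -/
def Sees {n : ℕ} [NeZero n] (v : Fin n → Pt) (x y : Pt) : Prop :=
  segment ℝ x y ⊆ polyRegion v

/-- The kernel of the polygon: the points of the region that see every point of it. -/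
def polyKernel {n : ℕ} [NeZero n] (v : Fin n → Pt) : Set Pt :=
  {x ∈ polyRegion v | ∀ y ∈ polyRegion v, segment ℝ x y ⊆ polyRegion v}

/-- The open triangle on three points. -/
def openTriangle (a b c : Pt) : Set Pt := interior (convexHull ℝ {a, b, c})

/-- `a b c d` (in counterclockwise order) form a strictly convex quadrilateral. -/
def StrictConvexQuad (a b c d : Pt) : Prop :=
  0 < det2 (b - a) (c - b) ∧ 0 < det2 (c - b) (d - c) ∧
    0 < det2 (d - c) (a - d) ∧ 0 < det2 (a - d) (b - a)

/-- The closed region of a quadrilateral cell. -/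
noncomputable def quadSet (q : Pt × Pt × Pt × Pt) : Set Pt :=
  convexHull ℝ {q.1, q.2.1, q.2.2.1, q.2.2.2}

/-- The closed region of a triangular cell. -/
noncomputable def triSet (t : Pt × Pt × Pt) : Set Pt :=
  convexHull ℝ {t.1, t.2.1, t.2.2}

/-- The vertices of a quadrilateral cell. -/
noncomputable def quadVerts (q : Pt × Pt × Pt × Pt) : Finset Pt :=
  {q.1, q.2.1, q.2.2.1, q.2.2.2}

/-- The vertices of a triangular cell. -/
noncomputable def triVerts (t : Pt × Pt × Pt) : Finset Pt :=
  {t.1, t.2.1, t.2.2}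

/-- A strictly convex quadrangulation of a finite planar point set `S`:
a decomposition of `conv S` into strictly convex quadrilaterals and at most one
(nondegenerate) triangle, with pairwise disjoint interiors, whose vertex set contains
`S`, and such that no point of `S` is interior to a cell. -/
structure ConvexQuadrangulation (S : Finset Pt) where
  quads : Finset (Pt × Pt × Pt × Pt)
  tris : Finset (Pt × Pt × Pt)
  tris_card : tris.card ≤ 1
  quads_convex : ∀ q ∈ quads, StrictConvexQuad q.1 q.2.1 q.2.2.1 q.2.2.2
  tris_nondeg : ∀ t ∈ tris, 0 < det2 (t.2.1 - t.1) (t.2.2 - t.2.1)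
  covers : ((⋃ q ∈ quads, quadSet q) ∪ ⋃ t ∈ tris, triSet t) = convexHull ℝ (S : Set Pt)
  cells_disjoint : ((quadSet '' quads) ∪ (triSet '' tris)).Pairwise
    fun A B => interior A ∩ interior B = ∅
  verts_cover : (S : Set Pt) ⊆
    ((quads.biUnion quadVerts ∪ tris.biUnion triVerts : Finset Pt) : Set Pt)
  no_pt_in_quad_interior : ∀ q ∈ quads, ∀ p ∈ S, p ∉ interior (quadSet q)
  no_pt_in_tri_interior : ∀ t ∈ tris, ∀ p ∈ S, p ∉ interior (triSet t)

/-- The Steiner points of a quadrangulation: vertices of the decomposition not in `S`. -/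
noncomputable def steinerPoints (S : Finset Pt) (Q : ConvexQuadrangulation S) : Finset Pt :=
  (Q.quads.biUnion quadVerts ∪ Q.tris.biUnion triVerts) \ S

/-!
Angles are measured in turns. A point `x` sees the whole polygon from the inside as soon as it lies
strictly to the left of every edge: a segment from `x` that left the region would re-enter it
through the left side of an edge, where there is only interior. Conversely, an interior point of
the kernel lies strictly to the left of every edge.

So the point is that lying to the left of the edges at the strictly convex vertices is enough.
Follow the angle from the ray `x → v i` to the direction of the `i`-th edge. Over one tour of the
boundary its increments add up to the total exterior angle minus the winding number around `x`,
which is `1 - 1 = 0` by Hopf's Umlaufsatz. It lies in `(0, 1/2)` when `x` is to the left of the edge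
and in `(-1/2, 0)` when `x` is to the right, so the integer carried at a vertex is never negative,
and it is positive whenever one passes from an edge with `x` on its right to an edge with `x` on its
left. Such a passage therefore never happens, and if `x` were to the right of one edge it would be
to the right of all of them, contradicting the winding number.

The interior is identified with the set of winding number `1` without the Jordan curve theorem:
walking along the boundary on a fixed side shows that each component of the complement touches
every edge, always from the same side, the winding number jumps by `1` across an edge, and its
integral over the plane is the signed area.
-/

section Angles

open Complex

/-- The Euclidean inner product of plane vectors, companion to `det2`; `Pt = ℝ × ℝ` has no
inner product of its own since it carries the sup norm. -/
def dot2 (u z : Pt) : ℝ := u.1 * z.1 + u.2 * z.2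

/-- The identification of the plane with `ℂ`, used to measure angles by `Complex.arg`. -/
noncomputable def toComplex : Pt ≃L[ℝ] ℂ := Complex.equivRealProdCLM.symm

/-- The oriented angle from `a` to `b`, measured in full turns, with values in `(-1/2, 1/2]`.
It has the junk value `0` when `a` or `b` vanishes. -/
noncomputable def ang (a b : Pt) : ℝ := arg (toComplex b / toComplex a) / (2 * Real.pi)

variable {a b c u p : Pt}

@[simp] lemma toComplex_re (a : Pt) : (toComplex a).re = a.1 := by
  simp [toComplex]

@[simp] lemma toComplex_im (a : Pt) : (toComplex a).im = a.2 := by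
  simp [toComplex]

lemma toComplex_ne_zero (ha : a ≠ 0) : toComplex a ≠ 0 :=
  (map_ne_zero_iff _ toComplex.injective).2 ha

lemma dot2_add_right (u a b : Pt) : dot2 u (a + b) = dot2 u a + dot2 u b := by
  simp only [dot2, Prod.fst_add, Prod.snd_add]
  ring

lemma dot2_neg_right (u a : Pt) : dot2 u (-a) = -dot2 u a := by
  simp only [dot2, Prod.fst_neg, Prod.snd_neg]
  ring

lemma dot2_neg_left (u a : Pt) : dot2 (-u) a = -dot2 u a := by
  simp only [dot2, Prod.fst_neg, Prod.snd_neg]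
  ring

lemma dot2_smul_right (t : ℝ) (u a : Pt) : dot2 u (t • a) = t * dot2 u a := by
  simp only [dot2, Prod.smul_fst, Prod.smul_snd, smul_eq_mul]
  ring

lemma dot2_sub_right (u a b : Pt) : dot2 u (a - b) = dot2 u a - dot2 u b := by
  simp only [dot2, Prod.fst_sub, Prod.snd_sub]
  ring

lemma dot2_self_pos (ha : a ≠ 0) : 0 < dot2 a a := by
  have hnonneg : 0 ≤ dot2 a a := add_nonneg (mul_self_nonneg _) (mul_self_nonneg _)
  refine hnonneg.lt_of_ne fun h => ha ?_
  exact Prod.ext_iff.2 (mul_self_add_mul_self_eq_zero.1 h.symm)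

lemma ne_zero_of_dot2_ne_zero_left (h : dot2 a b ≠ 0) : a ≠ 0 := by
  rintro rfl
  simp [dot2] at h

lemma ne_zero_of_dot2_ne_zero_right (h : dot2 a b ≠ 0) : b ≠ 0 := by
  rintro rfl
  simp [dot2] at h

lemma ne_zero_of_det2_ne_zero_left (h : det2 a b ≠ 0) : a ≠ 0 := by
  rintro rfl
  simp [det2] at h

lemma det2_swap (a b : Pt) : det2 b a = -det2 a b := by
  simp only [det2]
  ring

lemma det2_smul_right (t : ℝ) (a b : Pt) : det2 a (t • b) = t * det2 a b := by
  simp only [det2, Prod.smul_fst, Prod.smul_snd, smul_eq_mul]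
  ring

lemma toComplex_div_im (a b : Pt) : (toComplex b / toComplex a).im = det2 a b / dot2 a a := by
  simp only [det2, dot2, div_im, normSq_apply, toComplex_re, toComplex_im]
  ring

lemma toComplex_div_re (a b : Pt) : (toComplex b / toComplex a).re = dot2 a b / dot2 a a := by
  simp only [dot2, div_re, normSq_apply, toComplex_re, toComplex_im]
  ring

lemma ang_le_half (a b : Pt) : ang a b ≤ 1 / 2 := by
  rw [ang, div_le_iff₀ Real.two_pi_pos]
  linarith [arg_le_pi (toComplex b / toComplex a)]

lemma neg_half_lt_ang (a b : Pt) : -(1 / 2) < ang a b := by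
  rw [ang, lt_div_iff₀ Real.two_pi_pos]
  linarith [neg_pi_lt_arg (toComplex b / toComplex a)]

lemma ang_neg_of_det2_neg (h : det2 a b < 0) : ang a b < 0 := by
  refine div_neg_of_neg_of_pos (arg_neg_iff.2 ?_) Real.two_pi_pos
  rw [toComplex_div_im]
  exact div_neg_of_neg_of_pos h (dot2_self_pos (ne_zero_of_det2_ne_zero_left h.ne))

lemma ang_neg_neg (a b : Pt) : ang (-a) (-b) = ang a b := by
  simp only [ang, map_neg, neg_div_neg_eq]

lemma ang_self_neg (ha : a ≠ 0) : ang a (-a) = 1 / 2 := by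
  rw [ang, map_neg, neg_div, div_self (toComplex_ne_zero ha), arg_neg_one]
  field_simp

lemma ang_swap (h : det2 a b ≠ 0) : ang b a = -ang a b := by
  have harg : arg (toComplex b / toComplex a) ≠ Real.pi := fun hpi => by
    have him := (arg_eq_pi_iff.1 hpi).2
    rw [toComplex_div_im, div_eq_zero_iff] at him
    exact him.elim h (dot2_self_pos (ne_zero_of_det2_ne_zero_left h)).ne'
  rw [ang, ang, ← inv_div (toComplex b), arg_inv, if_neg harg, neg_div]

lemma ang_pos_of_det2_pos (h : 0 < det2 a b) : 0 < ang a b := by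
  have hswap : det2 b a < 0 := by rwa [det2_swap, neg_lt_zero]
  linarith [ang_neg_of_det2_neg hswap, ang_swap hswap.ne]

lemma ang_lt_half_of_det2_ne_zero (h : det2 a b ≠ 0) : ang a b < 1 / 2 := by
  linarith [ang_swap h, neg_half_lt_ang b a]

lemma exists_ang_eq_add (ha : a ≠ 0) (hb : b ≠ 0) (hc : c ≠ 0) :
    ∃ k : ℤ, ang a c = ang a b + ang b c + k := by
  have h := arg_mul_coe_angle
    (div_ne_zero (toComplex_ne_zero hb) (toComplex_ne_zero ha))
    (div_ne_zero (toComplex_ne_zero hc) (toComplex_ne_zero hb))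
  rw [mul_comm, div_mul_div_cancel₀ (toComplex_ne_zero hb), ← Real.Angle.coe_add,
    Real.Angle.angle_eq_iff_two_pi_dvd_sub] at h
  obtain ⟨k, hk⟩ := h
  refine ⟨k, ?_⟩
  simp only [ang]
  field_simp
  linarith

lemma intCast_eq_zero_of_abs_lt_one {k : ℤ} (h : |(k : ℝ)| < 1) : (k : ℝ) = 0 := by
  exact_mod_cast Int.abs_lt_one_iff.1 (by exact_mod_cast h)

lemma abs_ang_lt_quarter (h : 0 < dot2 u a) : |ang u a| < 1 / 4 := by
  have harg : |arg (toComplex a / toComplex u)| < Real.pi / 2 := by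
    refine abs_arg_lt_pi_div_two_iff.2 (Or.inl ?_)
    rw [toComplex_div_re]
    exact div_pos h (dot2_self_pos (ne_zero_of_dot2_ne_zero_left h.ne'))
  rw [ang, abs_div, abs_of_pos Real.two_pi_pos, div_lt_iff₀ Real.two_pi_pos]
  linarith

lemma ang_eq_sub_of_dot2_pos (ha : 0 < dot2 u a) (hb : 0 < dot2 u b) :
    ang a b = ang u b - ang u a := by
  obtain ⟨k, hk⟩ := exists_ang_eq_add (ne_zero_of_dot2_ne_zero_left ha.ne')
    (ne_zero_of_dot2_ne_zero_right ha.ne') (ne_zero_of_dot2_ne_zero_right hb.ne')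
  obtain ⟨ha₁, ha₂⟩ := abs_lt.1 (abs_ang_lt_quarter ha)
  obtain ⟨hb₁, hb₂⟩ := abs_lt.1 (abs_ang_lt_quarter hb)
  have hk0 : (k : ℝ) = 0 := intCast_eq_zero_of_abs_lt_one <| abs_lt.2
    ⟨by linarith [ang_le_half a b], by linarith [neg_half_lt_ang a b]⟩
  linarith

lemma ang_add_of_dot2_pos (ha : 0 < dot2 u a) (hb : 0 < dot2 u b) (hc : 0 < dot2 u c) :
    ang a b + ang b c = ang a c := by
  rw [ang_eq_sub_of_dot2_pos ha hb, ang_eq_sub_of_dot2_pos hb hc, ang_eq_sub_of_dot2_pos ha hc]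
  ring

lemma div_mem_slitPlane_of_notMem_segment (h : p ∉ segment ℝ a b) :
    toComplex (b - p) / toComplex (a - p) ∈ slitPlane := by
  contrapose! h
  have harg : arg (toComplex (b - p) / toComplex (p - a)) = 0 := by
    rw [← neg_sub a p, map_neg, div_neg, arg_eq_zero_iff]
    rw [mem_slitPlane_iff, not_or, not_lt, not_not] at h
    exact ⟨by simpa using h.1, by simpa using h.2⟩
  rw [← sameRay_iff_arg_div_eq_zero] at harg
  rw [mem_segment_iff_sameRay]
  exact ((SameRay.sameRay_map_iff toComplex.toLinearEquiv).1 harg).symm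

lemma continuousAt_ang_sub (h : p ∉ segment ℝ a b) :
    ContinuousAt (fun q => ang (a - q) (b - q)) p := by
  have hap : a - p ≠ 0 := sub_ne_zero.2 fun hap => h (hap ▸ left_mem_segment ℝ a b)
  have hdiv : ContinuousAt (fun q => toComplex (b - q) / toComplex (a - q)) p :=
    ContinuousAt.div (by fun_prop) (by fun_prop) (toComplex_ne_zero hap)
  exact (ContinuousAt.comp (f := fun q => toComplex (b - q) / toComplex (a - q))
    (continuousAt_arg (div_mem_slitPlane_of_notMem_segment h)) hdiv).div_const _

lemma exists_dot2_pos_of_isClosed_of_convex {K : Set Pt} (hconv : Convex ℝ K) (hK : IsClosed K)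
    (hp : p ∉ K) : ∃ u, ∀ z ∈ K, 0 < dot2 u (z - p) := by
  obtain ⟨f, s, hfp, hfK⟩ := geometric_hahn_banach_point_closed hconv hK hp
  refine ⟨(f (1, 0), f (0, 1)), fun z hz => ?_⟩
  have hf (w : Pt) : f w = dot2 (f (1, 0), f (0, 1)) w := by
    conv_lhs => rw [show w = w.1 • ((1, 0) : Pt) + w.2 • ((0, 1) : Pt) by ext <;> simp]
    simp only [map_add, map_smul, smul_eq_mul, dot2]
    ring
  rw [← hf, map_sub]
  linarith [hfK z hz]

end Angles

section Orientation

open Filter MeasureTheory Set Topology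

/-- Twice the signed area of the triangle `a b p`; it is positive iff `p` lies strictly to the left
of the directed line from `a` to `b`. -/
noncomputable def orient (a b p : Pt) : ℝ := det2 (b - a) (p - a)

/-- The open half-plane bounded by the line `ab` that lies to the left of the directed line from `a`
to `b` when `0 < s`, and to the right when `s < 0`. -/
def side (s : ℝ) (a b : Pt) : Set Pt := {p | 0 < s * orient a b p}

variable {a b p q m x : Pt} {s : ℝ}

@[simp] lemma orient_left (a b : Pt) : orient a b a = 0 := by
  simp [orient, det2]

@[simp] lemma orient_right (a b : Pt) : orient a b b = 0 := by
  simp only [orient, det2]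
  ring

lemma orient_rotate (a b c : Pt) : orient b c a = orient a b c := by
  simp only [orient, det2, Prod.fst_sub, Prod.snd_sub]
  ring

lemma orient_swap (a b c : Pt) : orient b a c = -orient a b c := by
  simp only [orient, det2, Prod.fst_sub, Prod.snd_sub]
  ring

lemma det2_sub_sub (a b p : Pt) : det2 (a - p) (b - p) = orient a b p := by
  simp only [orient, det2, Prod.fst_sub, Prod.snd_sub]
  ring

lemma det2_sub_sub_eq_orient (a b c : Pt) : det2 (b - a) (c - b) = orient a b c := by
  simp only [orient, det2, Prod.fst_sub, Prod.snd_sub]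
  ring

lemma orient_add (a b p w : Pt) : orient a b (p + w) = orient a b p + det2 (b - a) w := by
  simp only [orient, det2, Prod.fst_sub, Prod.snd_sub, Prod.fst_add, Prod.snd_add]
  ring

lemma orient_combo (a b p q : Pt) {α β : ℝ} (h : α + β = 1) :
    orient a b (α • p + β • q) = α * orient a b p + β * orient a b q := by
  obtain rfl := eq_sub_of_add_eq h
  simp only [orient, det2, Prod.fst_sub, Prod.snd_sub, Prod.fst_add, Prod.snd_add, Prod.smul_fst,
    Prod.smul_snd, smul_eq_mul]
  ring

lemma orient_eq_zero_of_mem_segment (hp : p ∈ segment ℝ a b) : orient a b p = 0 := by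
  obtain ⟨α, β, -, -, hαβ, rfl⟩ := hp
  rw [orient_combo a b a b hαβ, orient_left, orient_right, mul_zero, mul_zero, add_zero]

lemma orient_eq_zero_of_mem_openSegment (hp : p ∈ openSegment ℝ a b) : orient a b p = 0 :=
  orient_eq_zero_of_mem_segment (openSegment_subset_segment ℝ a b hp)

lemma mul_orient_pos_of_mem_openSegment (hq : 0 ≤ s * orient a b q) (hp : 0 < s * orient a b p)
    (hx : x ∈ openSegment ℝ q p) : 0 < s * orient a b x := by
  obtain ⟨α, β, hα, hβ, hαβ, rfl⟩ := hx
  rw [orient_combo a b q p hαβ, mul_add, mul_left_comm, mul_left_comm s β]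
  positivity

@[fun_prop]
lemma continuous_orient (a b : Pt) : Continuous (orient a b) := by
  unfold orient det2
  fun_prop

lemma side_neg (s : ℝ) (a b : Pt) : side (-s) a b = side s b a := by
  ext p
  simp only [side, orient_swap a b p, mem_ofPred_eq, neg_mul, mul_neg]

lemma mem_side_one : p ∈ side 1 a b ↔ 0 < orient a b p := by
  simp [side]

lemma mem_side_neg_one : p ∈ side (-1) a b ↔ orient a b p < 0 := by
  simp [side]

lemma isOpen_side (s : ℝ) (a b : Pt) : IsOpen (side s a b) :=
  isOpen_lt continuous_const (continuous_const.mul (continuous_orient a b))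

lemma convex_side (s : ℝ) (a b : Pt) : Convex ℝ (side s a b) :=
  convex_iff_openSegment_subset.2 fun _ hp _ hq _ hx =>
    mul_orient_pos_of_mem_openSegment (le_of_lt hp) hq hx

lemma notMem_side_of_mem_segment (hp : p ∈ segment ℝ a b) : p ∉ side s a b := by
  simp [side, orient_eq_zero_of_mem_segment hp]

lemma tendsto_add_smul_nhdsGT (x w : Pt) :
    Tendsto (fun t : ℝ => x + t • w) (𝓝[>] 0) (𝓝 x) := by
  have hcont : Continuous fun t : ℝ => x + t • w := by fun_prop
  simpa using (hcont.tendsto 0).mono_left nhdsWithin_le_nhds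

lemma nhdsWithin_side_neBot (hab : a ≠ b) (hs : s ≠ 0) (hm : orient a b m = 0) :
    (𝓝[side s a b] m).NeBot := by
  set w : Pt := s • (-(b - a).2, (b - a).1)
  refine mem_closure_iff_nhdsWithin_neBot.1 <|
    mem_closure_of_tendsto (tendsto_add_smul_nhdsGT m w) ?_
  filter_upwards [self_mem_nhdsWithin] with t (ht : 0 < t)
  have horient : s * orient a b (m + t • w) = t * (s * s) * dot2 (b - a) (b - a) := by
    rw [orient_add, hm]
    simp only [w, det2, dot2, Prod.smul_fst, Prod.smul_snd, smul_eq_mul]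
    ring
  have hs2 : 0 < s * s := mul_self_pos.2 hs
  have hdot : 0 < dot2 (b - a) (b - a) := dot2_self_pos (sub_ne_zero.2 hab.symm)
  change 0 < s * orient a b (m + t • w)
  rw [horient]
  positivity

lemma ae_orient_ne_zero (hab : a ≠ b) : ∀ᵐ p : Pt, orient a b p ≠ 0 := by
  let f : Pt →ₗ[ℝ] ℝ :=
    (b - a).1 • LinearMap.snd ℝ ℝ ℝ - (b - a).2 • LinearMap.fst ℝ ℝ ℝ
  have hf (w : Pt) : f w = det2 (b - a) w := by simp [f, det2]
  let line : AffineSubspace ℝ Pt := AffineSubspace.mk' a f.ker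
  have hline (p : Pt) : p ∈ line ↔ orient a b p = 0 := by
    rw [AffineSubspace.mem_mk', LinearMap.mem_ker, vsub_eq_sub, hf, orient]
  have hne_top : line ≠ ⊤ := fun htop => by
    obtain ⟨p, hp⟩ := (nhdsWithin_side_neBot hab one_ne_zero (orient_left a b)).nonempty_of_mem
      self_mem_nhdsWithin
    have hp0 : orient a b p = 0 := (hline p).1 (htop ▸ AffineSubspace.mem_top ℝ Pt p)
    simp [side, hp0] at hp
  filter_upwards [compl_mem_ae_iff.2 (Measure.addHaar_affineSubspace volume line hne_top)] with p hp
  exact fun hp0 => hp ((hline p).2 hp0)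

lemma exists_mem_of_ae {U : Set Pt} {P : Pt → Prop} (hU : IsOpen U) (hne : U.Nonempty)
    (hP : ∀ᵐ p : Pt, P p) : ∃ p ∈ U, P p := by
  obtain ⟨p, hp, hpU⟩ := (Measure.dense_of_ae hP).exists_mem_open hU hne
  exact ⟨p, hpU, hp⟩

end Orientation

section Segments

open Metric Set

lemma isCompact_segment {E : Type*} [AddCommGroup E] [Module ℝ E] [TopologicalSpace E]
    [ContinuousAdd E] [ContinuousSMul ℝ E] (a b : E) : IsCompact (segment ℝ a b) := by
  rw [segment_eq_image]
  exact isCompact_Icc.image (by fun_prop)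

lemma exists_mem_segment_disjoint_openSegment {E : Type*} [NormedAddCommGroup E] [NormedSpace ℝ E]
    {F : Set E} (hF : IsClosed F) {x y : E} (hx : x ∉ F) (hy : y ∈ F) :
    ∃ z ∈ F ∩ segment ℝ x y, Disjoint (openSegment ℝ x z) F := by
  obtain ⟨z, ⟨hzF, hz⟩, hmin⟩ := ((isCompact_segment x y).inter_left hF).exists_isMinOn
    ⟨y, hy, right_mem_segment ℝ x y⟩ (f := fun w => dist x w) (by fun_prop)
  refine ⟨z, ⟨hzF, hz⟩, disjoint_left.2 fun w hw hwF => ?_⟩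
  have hw' : w ∈ segment ℝ x y :=
    (convex_segment x y).openSegment_subset (left_mem_segment ℝ x y) hz hw
  have hle : dist x z ≤ dist x w := hmin ⟨hwF, hw'⟩
  have hadd := dist_add_dist_of_mem_segment (openSegment_subset_segment ℝ x z hw)
  obtain rfl : w = z := dist_le_zero.1 (by linarith)
  exact hx (right_mem_openSegment_iff.1 hw ▸ hwF)

end Segments

section WindingNumber

open Filter Set Topology

variable {n : ℕ} [NeZero n] {v : Fin n → Pt} {p q : Pt}

/-- The winding number of the closed polygonal path through the points `v i` around `p`, as a sum of
angles in full turns. It is an integer when `p` is off the path. -/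
noncomputable def wind (v : Fin n → Pt) (p : Pt) : ℝ :=
  ∑ i, ang (v i - p) (v (i + 1) - p)

lemma sum_comp_add_one (f : Fin n → ℝ) : ∑ i, f (i + 1) = ∑ i, f i :=
  Equiv.sum_comp (Equiv.addRight (1 : Fin n)) f

lemma notMem_polyBoundary_iff :
    p ∉ polyBoundary v ↔ ∀ i, p ∉ segment ℝ (v i) (v (i + 1)) := by
  simp [polyBoundary]

lemma isClosed_polyBoundary (v : Fin n → Pt) : IsClosed (polyBoundary v) :=
  isClosed_iUnion_of_finite fun _ => (isCompact_segment _ _).isClosed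

lemma polyBoundary_subset_convexHull (v : Fin n → Pt) :
    polyBoundary v ⊆ convexHull ℝ (range v) :=
  iUnion_subset fun i => segment_subset_convexHull (mem_range_self i) (mem_range_self (i + 1))

lemma sub_ne_zero_of_notMem_polyBoundary (hp : p ∉ polyBoundary v) (i : Fin n) : v i - p ≠ 0 :=
  sub_ne_zero.2 fun h => notMem_polyBoundary_iff.1 hp i (h ▸ left_mem_segment ℝ _ _)

lemma exists_wind_eq_intCast (hp : p ∉ polyBoundary v) : ∃ k : ℤ, (k : ℝ) = wind v p := by
  have hne := sub_ne_zero_of_notMem_polyBoundary hp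
  let d : Pt := v 0 - p
  choose k hk using fun i => exists_ang_eq_add (hne 0) (hne i) (hne (i + 1))
  refine ⟨-∑ i, k i, ?_⟩
  have hsum : ∑ i, ang d (v (i + 1) - p) =
      ∑ i, ang d (v i - p) + wind v p + ∑ i, (k i : ℝ) := by
    simp only [wind, ← Finset.sum_add_distrib]
    exact Finset.sum_congr rfl fun i _ => hk i
  rw [sum_comp_add_one fun i => ang d (v i - p)] at hsum
  push_cast
  linarith

lemma wind_eq_zero_of_notMem_convexHull (hp : p ∉ convexHull ℝ (range v)) : wind v p = 0 := by
  obtain ⟨u, hu⟩ := exists_dot2_pos_of_isClosed_of_convex (convex_convexHull ℝ (range v))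
    ((finite_range v).isCompact_convexHull ℝ).isClosed hp
  have hpos (i : Fin n) : 0 < dot2 u (v i - p) :=
    hu _ (subset_convexHull ℝ _ (mem_range_self i))
  rw [wind, Finset.sum_congr rfl fun i _ => ang_eq_sub_of_dot2_pos (hpos i) (hpos (i + 1)),
    Finset.sum_sub_distrib, sum_comp_add_one fun i => ang u (v i - p), sub_self]

lemma continuousAt_wind (hp : p ∉ polyBoundary v) : ContinuousAt (wind v) p :=
  tendsto_finsetSum _ fun i _ => continuousAt_ang_sub (notMem_polyBoundary_iff.1 hp i)

lemma wind_eq_of_isPreconnected {S : Set Pt} (hS : IsPreconnected S)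
    (hSv : S ⊆ (polyBoundary v)ᶜ) (hp : p ∈ S) (hq : q ∈ S) : wind v p = wind v q := by
  obtain ⟨c, -, hc⟩ := hS.eqOn_const_of_mapsTo
    Int.isClosedEmbedding_coe_real.isInducing.isDiscrete_range
    (fun z hz => (continuousAt_wind (hSv hz)).continuousWithinAt)
    (fun z hz => exists_wind_eq_intCast (hSv hz)) (range_nonempty _)
  exact (hc hp).trans (hc hq).symm

lemma wind_eq_of_mem_connectedComponentIn
    (hq : q ∈ connectedComponentIn (polyBoundary v)ᶜ p) : wind v q = wind v p :=
  wind_eq_of_isPreconnected isPreconnected_connectedComponentIn (connectedComponentIn_subset _ _) hq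
    (mem_connectedComponentIn (connectedComponentIn_nonempty_iff.1 ⟨q, hq⟩))

end WindingNumber

section Combinatorics

open Set

variable {n : ℕ} [NeZero n] {v : Fin n → Pt}

open scoped Fin.CommRing in
lemma forall_of_imp_add_one {P : Fin n → Prop} (hP : ∀ i, P i → P (i + 1)) {j : Fin n} (hj : P j)
    (i : Fin n) : P i := by
  have hadd (k : ℕ) : P (j + (k : Fin n)) := by
    induction k with
    | zero => simpa using hj
    | succ k ih => simpa [add_assoc] using hP _ ih
  simpa using hadd (i - j).val

namespace IsSimplePolygon

lemma fin_one_ne_zero (h : IsSimplePolygon v) : (1 : Fin n) ≠ 0 := by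
  have h3 := h.1
  rw [Ne, Fin.ext_iff, Fin.val_one', Nat.mod_eq_of_lt (by lia)]
  exact Nat.one_ne_zero

lemma fin_one_add_one_ne_zero (h : IsSimplePolygon v) : (1 : Fin n) + 1 ≠ 0 := by
  have h3 := h.1
  have : (1 : Fin n).val = 1 := by rw [Fin.val_one', Nat.mod_eq_of_lt (by lia)]
  rw [Ne, Fin.ext_iff, Fin.val_add, this, Nat.mod_eq_of_lt (by lia)]
  exact two_ne_zero

lemma ne_add_one (h : IsSimplePolygon v) (i : Fin n) : i ≠ i + 1 := by
  simpa using h.fin_one_ne_zero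

lemma apply_ne_apply_add_one (h : IsSimplePolygon v) (i : Fin n) : v i ≠ v (i + 1) :=
  h.2.1.ne (h.ne_add_one i)

lemma apply_ne_apply_add_two (h : IsSimplePolygon v) (i : Fin n) : v i ≠ v (i + 1 + 1) :=
  h.2.1.ne <| by simpa [add_assoc] using h.fin_one_add_one_ne_zero

lemma edge_ne_zero (h : IsSimplePolygon v) (i : Fin n) : v (i + 1) - v i ≠ 0 :=
  sub_ne_zero.2 (h.apply_ne_apply_add_one i).symm

lemma notMem_segment_of_mem_openSegment (h : IsSimplePolygon v) {i j : Fin n} (hij : j ≠ i)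
    {m : Pt} (hm : m ∈ openSegment ℝ (v i) (v (i + 1))) :
    m ∉ segment ℝ (v j) (v (j + 1)) := by
  intro hj
  rcases (h.2.2 i j hij.symm ⟨openSegment_subset_segment _ _ _ hm, hj⟩).1 with rfl | rfl
  · exact h.apply_ne_apply_add_one i (left_mem_openSegment_iff.1 hm)
  · exact h.apply_ne_apply_add_one i (right_mem_openSegment_iff.1 hm)

lemma vertex_notMem_segment (h : IsSimplePolygon v) {i j : Fin n} (hij : j ≠ i)
    (hij' : j ≠ i + 1) : v (i + 1) ∉ segment ℝ (v j) (v (j + 1)) := by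
  intro hj
  rcases (h.2.2 i j hij.symm ⟨right_mem_segment _ _ _, hj⟩).2 with heq | heq
  · exact hij' (h.2.1 heq).symm
  · exact hij (add_right_cancel (h.2.1 heq)).symm

lemma disjoint_segment (h : IsSimplePolygon v) {i j : Fin n} (hij : i ≠ j) (hi : j ≠ i + 1)
    (hj : i ≠ j + 1) :
    Disjoint (segment ℝ (v i) (v (i + 1))) (segment ℝ (v j) (v (j + 1))) := by
  refine disjoint_left.2 fun x hxi hxj => ?_
  obtain ⟨rfl | rfl, hx⟩ := h.2.2 i j hij ⟨hxi, hxj⟩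
  · rcases hx with heq | heq
    exacts [hij (h.2.1 heq), hj (h.2.1 heq)]
  · exact h.vertex_notMem_segment hij.symm hi hxj

lemma exists_dot2_edges_pos (h : IsSimplePolygon v) (i : Fin n) :
    ∃ u, 0 < dot2 u (v (i + 1) - v i) ∧ 0 < dot2 u (v (i + 1 + 1) - v (i + 1)) := by
  suffices hfold : (0 : Pt) ∉ segment ℝ (v (i + 1) - v i) (v (i + 1 + 1) - v (i + 1)) by
    obtain ⟨u, hu⟩ := exists_dot2_pos_of_isClosed_of_convex (convex_segment _ _)
      (isCompact_segment _ _).isClosed hfold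
    simp only [sub_zero] at hu
    exact ⟨u, hu _ (left_mem_segment ℝ _ _), hu _ (right_mem_segment ℝ _ _)⟩
  rintro ⟨α, β, hα, hβ, hαβ, hzero⟩
  obtain rfl := eq_sub_of_add_eq hαβ
  set z : Pt := v (i + 1) + β • (v (i + 1 + 1) - v (i + 1)) with hz
  have hz₁ : z ∈ segment ℝ (v i) (v (i + 1)) := by
    refine ⟨1 - β, β, hα, hβ, hαβ, ?_⟩
    rw [hz, eq_neg_of_add_eq_zero_right hzero]
    module
  have hz₂ : z ∈ segment ℝ (v (i + 1)) (v (i + 1 + 1)) := ⟨1 - β, β, hα, hβ, hαβ, by module⟩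
  have hz_eq : z = v (i + 1) := by
    obtain ⟨hzi | hzi, hzj | hzj⟩ := h.2.2 i (i + 1) (h.ne_add_one i) ⟨hz₁, hz₂⟩
    exacts [hzj, absurd (hzi.symm.trans hzj) (h.apply_ne_apply_add_two i), hzi, hzi]
  obtain rfl : β = 0 := by
    rw [hz, add_eq_left, smul_eq_zero] at hz_eq
    exact hz_eq.resolve_right (h.edge_ne_zero (i + 1))
  exact h.edge_ne_zero i (by simpa using hzero)

end IsSimplePolygon

end Combinatorics

section Sides

open Filter Metric Set Topology

variable {n : ℕ} [NeZero n] {v : Fin n → Pt} {a b c m p x y : Pt} {i : Fin n} {s : ℝ}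

/-- Twice the signed area of the triangle of three consecutive vertices, the middle one being
`v (i + 1)`: positive iff the polygon turns left there. -/
noncomputable def turn (v : Fin n → Pt) (i : Fin n) : ℝ :=
  orient (v i) (v (i + 1)) (v (i + 1 + 1))

/-- Approaching the edge `i` from its side `s`, one ends up in the component of `x` off the
boundary. -/
def SideAdjacent (v : Fin n → Pt) (x : Pt) (s : ℝ) (i : Fin n) : Prop :=
  ∀ m ∈ openSegment ℝ (v i) (v (i + 1)), ∀ᶠ p in 𝓝[side s (v i) (v (i + 1))] m,
    p ∈ connectedComponentIn (polyBoundary v)ᶜ x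

/-- The sector at the vertex `v (i + 1)` lying on side `s` of the two edges meeting there; it is
an intersection or a union of half-planes according to the direction of the turn. -/
noncomputable def cornerSide (v : Fin n → Pt) (s : ℝ) (i : Fin n) : Set Pt :=
  if 0 < s * turn v i then side s (v i) (v (i + 1)) ∩ side s (v (i + 1)) (v (i + 1 + 1))
  else side s (v i) (v (i + 1)) ∪ side s (v (i + 1)) (v (i + 1 + 1))

lemma subset_connectedComponentIn_of_mem {X : Type*} [TopologicalSpace X] {F S : Set X} {x y : X}
    (hS : IsPreconnected S) (hSF : S ⊆ F) (hyS : y ∈ S) (hy : y ∈ connectedComponentIn F x) :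
    S ⊆ connectedComponentIn F x :=
  connectedComponentIn_eq hy ▸ hS.subset_connectedComponentIn hyS hSF

lemma exists_orient_eq_mul_of_mem_segment_right (hp : p ∈ segment ℝ b c) :
    ∃ t ≥ 0, orient a b p = t * orient a b c := by
  obtain ⟨α, β, -, hβ, hαβ, rfl⟩ := hp
  exact ⟨β, hβ, by rw [orient_combo a b b c hαβ, orient_right, mul_zero, zero_add]⟩

lemma exists_orient_eq_mul_of_mem_segment_left (hp : p ∈ segment ℝ a b) :
    ∃ t ≥ 0, orient b c p = t * orient a b c := by
  obtain ⟨α, β, hα, -, hαβ, rfl⟩ := hp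
  exact ⟨α, hα, by rw [orient_combo b c a b hαβ, orient_left, orient_rotate, mul_zero, add_zero]⟩

lemma eventually_notMem_segment {P : Fin n → Prop}
    (hm : ∀ j, P j → m ∉ segment ℝ (v j) (v (j + 1))) :
    ∀ᶠ p in 𝓝 m, ∀ j, P j → p ∉ segment ℝ (v j) (v (j + 1)) :=
  eventually_all.2 fun j => eventually_imp_distrib_left.2 fun hj =>
    (isCompact_segment _ _).isClosed.isOpen_compl.mem_nhds (hm j hj)

lemma exists_mem_openSegment_of_mem_nhds {U : Set Pt} (hU : U ∈ 𝓝 a) (b : Pt) :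
    ∃ m ∈ openSegment ℝ a b, m ∈ U := by
  have ha : a ∈ closure (openSegment ℝ a b) :=
    (closure_openSegment (𝕜 := ℝ) a b).symm ▸ left_mem_segment ℝ a b
  obtain ⟨m, hmU, hm⟩ := mem_closure_iff_nhds.1 ha U hU
  exact ⟨m, hm, hmU⟩

lemma IsSimplePolygon.nhdsWithin_side_neBot (h : IsSimplePolygon v) (hs : s ≠ 0)
    (hm : m ∈ openSegment ℝ (v i) (v (i + 1))) : (𝓝[side s (v i) (v (i + 1))] m).NeBot :=
  _root_.nhdsWithin_side_neBot (h.apply_ne_apply_add_one i) hs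
    (orient_eq_zero_of_mem_openSegment hm)

lemma SideAdjacent.mem_connectedComponentIn (h : IsSimplePolygon v) (hs : s ≠ 0)
    (hx : SideAdjacent v x s i) (hy : SideAdjacent v y s i) :
    y ∈ connectedComponentIn (polyBoundary v)ᶜ x := by
  obtain ⟨m, hm, -⟩ := exists_mem_openSegment_of_mem_nhds (univ_mem (f := 𝓝 (v i))) (v (i + 1))
  have := h.nhdsWithin_side_neBot hs hm
  obtain ⟨p, hpx, hpy⟩ := ((hx m hm).and (hy m hm)).exists
  have hyv : y ∈ (polyBoundary v)ᶜ := connectedComponentIn_nonempty_iff.1 ⟨p, hpy⟩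
  rw [connectedComponentIn_eq hpx, ← connectedComponentIn_eq hpy]
  exact _root_.mem_connectedComponentIn hyv

lemma notMem_segment_of_mem_cornerSide (hp : p ∈ cornerSide v s i) :
    p ∉ segment ℝ (v i) (v (i + 1)) ∧ p ∉ segment ℝ (v (i + 1)) (v (i + 1 + 1)) := by
  by_cases hturn : 0 < s * turn v i
  · rw [cornerSide, if_pos hturn] at hp
    exact ⟨fun h => notMem_side_of_mem_segment h hp.1, fun h => notMem_side_of_mem_segment h hp.2⟩
  rw [cornerSide, if_neg hturn] at hp
  have hnonpos {t : ℝ} (ht : 0 ≤ t) : ¬ 0 < s * (t * turn v i) := by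
    rw [mul_left_comm]
    exact (mul_nonpos_of_nonneg_of_nonpos ht (not_lt.1 hturn)).not_gt
  refine ⟨fun h => ?_, fun h => ?_⟩
  · obtain ⟨t, ht, horient⟩ := exists_orient_eq_mul_of_mem_segment_left (c := v (i + 1 + 1)) h
    have hside := hp.resolve_left (notMem_side_of_mem_segment h)
    rw [side, mem_ofPred_eq, horient] at hside
    exact hnonpos ht hside
  · obtain ⟨t, ht, horient⟩ := exists_orient_eq_mul_of_mem_segment_right (a := v i) h
    have hside := hp.resolve_right (notMem_side_of_mem_segment h)
    rw [side, mem_ofPred_eq, horient] at hside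
    exact hnonpos ht hside

lemma eventually_mem_cornerSide_left (hm : m ∈ openSegment ℝ (v i) (v (i + 1))) :
    ∀ᶠ p in 𝓝[side s (v i) (v (i + 1))] m, p ∈ cornerSide v s i := by
  rw [cornerSide]
  split_ifs with hturn
  · have hm' : m ∈ side s (v (i + 1)) (v (i + 1 + 1)) :=
      mul_orient_pos_of_mem_openSegment (by rw [orient_left, mul_zero])
        (by rwa [orient_rotate]) (by rwa [openSegment_symm])
    exact inter_mem self_mem_nhdsWithin
      (mem_nhdsWithin_of_mem_nhds ((isOpen_side _ _ _).mem_nhds hm'))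
  · exact mem_of_superset self_mem_nhdsWithin subset_union_left

lemma eventually_mem_cornerSide_right (hm : m ∈ openSegment ℝ (v (i + 1)) (v (i + 1 + 1))) :
    ∀ᶠ p in 𝓝[side s (v (i + 1)) (v (i + 1 + 1))] m, p ∈ cornerSide v s i := by
  rw [cornerSide]
  split_ifs with hturn
  · have hm' : m ∈ side s (v i) (v (i + 1)) :=
      mul_orient_pos_of_mem_openSegment (by rw [orient_right, mul_zero]) hturn hm
    exact inter_mem (mem_nhdsWithin_of_mem_nhds ((isOpen_side _ _ _).mem_nhds hm'))
      self_mem_nhdsWithin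
  · exact mem_of_superset self_mem_nhdsWithin subset_union_right

namespace IsSimplePolygon

lemma sideAdjacent_of_frequently (h : IsSimplePolygon v)
    (hm : m ∈ openSegment ℝ (v i) (v (i + 1)))
    (hfreq : ∃ᶠ p in 𝓝[side s (v i) (v (i + 1))] m, p ∈ connectedComponentIn (polyBoundary v)ᶜ x) :
    SideAdjacent v x s i := by
  intro m' hm'
  let K := segment ℝ m m'
  have hK : K ⊆ openSegment ℝ (v i) (v (i + 1)) :=
    (convex_openSegment _ _).segment_subset hm hm'
  have hdisj : Disjoint K (⋃ j : {j // j ≠ i}, segment ℝ (v j) (v (j + 1))) :=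
    disjoint_iUnion_right.2 fun j => disjoint_left.2 fun p hp =>
      h.notMem_segment_of_mem_openSegment j.2 (hK hp)
  obtain ⟨δ, hδ, hδdisj⟩ := hdisj.exists_thickenings (isCompact_segment m m')
    (isClosed_iUnion_of_finite fun _ => (isCompact_segment _ _).isClosed)
  let S := thickening δ K ∩ side s (v i) (v (i + 1))
  have hS : IsPreconnected S :=
    (((convex_segment m m').thickening δ).inter (convex_side _ _ _)).isPreconnected
  have hSv : S ⊆ (polyBoundary v)ᶜ := by
    rintro p ⟨hpK, hps⟩
    refine notMem_polyBoundary_iff.2 fun j hj => ?_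
    obtain rfl | hji := eq_or_ne j i
    · exact notMem_side_of_mem_segment hj hps
    · exact disjoint_left.1 hδdisj hpK
        (self_subset_thickening hδ _ (mem_iUnion.2 ⟨⟨j, hji⟩, hj⟩))
  have hS_mem {z : Pt} (hz : z ∈ K) : S ∈ 𝓝[side s (v i) (v (i + 1))] z :=
    inter_mem (mem_nhdsWithin_of_mem_nhds
      (isOpen_thickening.mem_nhds (self_subset_thickening hδ K hz))) self_mem_nhdsWithin
  obtain ⟨p, hp, hpS⟩ := (hfreq.and_eventually (hS_mem (left_mem_segment ℝ m m'))).exists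
  filter_upwards [hS_mem (right_mem_segment ℝ m m')] with q hq
  exact subset_connectedComponentIn_of_mem hS hSv hpS hp hq

lemma exists_ball_inter_cornerSide_subset (h : IsSimplePolygon v) (s : ℝ) (i : Fin n) :
    ∃ ε > 0, ball (v (i + 1)) ε ∩ cornerSide v s i ⊆ (polyBoundary v)ᶜ := by
  have hlocal := eventually_notMem_segment (v := v) (P := fun j => j ≠ i ∧ j ≠ i + 1)
    fun j hj => h.vertex_notMem_segment hj.1 hj.2
  obtain ⟨ε, hε, hball⟩ := Metric.eventually_nhds_iff_ball.1 hlocal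
  refine ⟨ε, hε, fun p ⟨hp, hpc⟩ => notMem_polyBoundary_iff.2 fun j => ?_⟩
  obtain ⟨hpi, hpi'⟩ := notMem_segment_of_mem_cornerSide hpc
  by_cases hj : j = i ∨ j = i + 1
  · obtain rfl | rfl := hj
    exacts [hpi, hpi']
  · exact hball p hp j (not_or.1 hj)

lemma isPreconnected_ball_inter_cornerSide (h : IsSimplePolygon v) (hs : s ≠ 0) {ε : ℝ}
    (hε : 0 < ε) : IsPreconnected (ball (v (i + 1)) ε ∩ cornerSide v s i) := by
  have hconvex (a b : Pt) : Convex ℝ (ball (v (i + 1)) ε ∩ side s a b) :=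
    (convex_ball _ _).inter (convex_side s a b)
  rw [cornerSide]
  split_ifs
  · rw [← inter_assoc]
    exact ((hconvex _ _).inter (convex_side _ _ _)).isPreconnected
  rw [inter_union_distrib_left]
  obtain ⟨u, hu₁, hu₂⟩ := h.exists_dot2_edges_pos i
  let w : Pt := s • (-u.2, u.1)
  have hdet (e : Pt) : det2 e w = s * dot2 u e := by
    simp only [w, det2, dot2, Prod.smul_fst, Prod.smul_snd, smul_eq_mul]
    ring
  obtain ⟨t, htball, ht⟩ := (((tendsto_add_smul_nhdsGT (v (i + 1)) w).eventually_mem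
    (ball_mem_nhds _ hε)).and self_mem_nhdsWithin).exists
  have hpos {a b : Pt} (hab : orient a b (v (i + 1)) = 0) (hu : 0 < dot2 u (b - a)) :
      v (i + 1) + t • w ∈ side s a b := by
    have horient : s * orient a b (v (i + 1) + t • w) = t * (s * s) * dot2 u (b - a) := by
      rw [orient_add, hab, det2_smul_right, hdet]
      ring
    rw [side, mem_ofPred_eq, horient]
    exact mul_pos (mul_pos ht (mul_self_pos.2 hs)) hu
  exact IsPreconnected.union (v (i + 1) + t • w) ⟨htball, hpos (orient_right _ _) hu₁⟩
    ⟨htball, hpos (orient_left _ _) hu₂⟩ (hconvex _ _).isPreconnected (hconvex _ _).isPreconnected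

lemma sideAdjacent_add_one (h : IsSimplePolygon v) (hs : s ≠ 0) (hi : SideAdjacent v x s i) :
    SideAdjacent v x s (i + 1) := by
  obtain ⟨ε, hε, hsub⟩ := h.exists_ball_inter_cornerSide_subset s i
  have hconn := h.isPreconnected_ball_inter_cornerSide (i := i) hs hε
  have hball : ball (v (i + 1)) ε ∈ 𝓝 (v (i + 1)) := ball_mem_nhds _ hε
  obtain ⟨m, hm, hmε⟩ := exists_mem_openSegment_of_mem_nhds hball (v i)
  rw [openSegment_symm] at hm
  have := h.nhdsWithin_side_neBot hs hm
  obtain ⟨p, ⟨hpx, hpc⟩, hpε⟩ := ((hi m hm).and (eventually_mem_cornerSide_left hm)).and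
    (mem_nhdsWithin_of_mem_nhds (isOpen_ball.mem_nhds hmε)) |>.exists
  obtain ⟨m', hm', hmε'⟩ := exists_mem_openSegment_of_mem_nhds hball (v (i + 1 + 1))
  have := h.nhdsWithin_side_neBot hs hm'
  refine h.sideAdjacent_of_frequently hm' (Eventually.frequently ?_)
  filter_upwards [eventually_mem_cornerSide_right hm',
    mem_nhdsWithin_of_mem_nhds (isOpen_ball.mem_nhds hmε')] with q hqc hqε
  exact subset_connectedComponentIn_of_mem hconn hsub ⟨hpε, hpc⟩ hpx ⟨hqε, hqc⟩

end IsSimplePolygon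

end Sides

section Dichotomy

open Filter MeasureTheory Set Topology

variable {n : ℕ} [NeZero n] {v : Fin n → Pt} {a b c m p x y : Pt} {i j : Fin n} {s : ℝ}

lemma ne_of_mem_segment_of_orient_ne_zero (hac : a ≠ c) (hb : orient a c b ≠ 0)
    (hp : p ∈ segment ℝ a b) : p ≠ c := by
  rintro rfl
  obtain ⟨α, β, -, -, hαβ, hp⟩ := hp
  have hβ : β = 0 := by
    have hzero : orient a p (α • a + β • b) = 0 := by rw [hp, orient_right]
    rw [orient_combo a p a b hαβ, orient_left, mul_zero, zero_add] at hzero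
    exact (mul_eq_zero.1 hzero).resolve_right hb
  have hα : α = 1 := by linarith
  exact hac (by rw [← hp, hα, hβ, one_smul, zero_smul, add_zero])

lemma frequently_mem_openSegment_nhdsWithin_side (hm : orient a b m = 0) (hy : y ∈ side s a b) :
    ∃ᶠ p in 𝓝[side s a b] m, p ∈ openSegment ℝ m y := by
  have hside : openSegment ℝ m y ⊆ side s a b := fun p hp =>
    mul_orient_pos_of_mem_openSegment (by rw [hm, mul_zero]) hy hp
  have hmem : m ∈ closure (openSegment ℝ m y) :=
    (closure_openSegment (𝕜 := ℝ) m y).symm ▸ left_mem_segment ℝ m y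
  exact frequently_nhdsWithin_iff.2
    ((mem_closure_iff_frequently.1 hmem).mono fun p hp => ⟨hp, hside hp⟩)

namespace IsSimplePolygon

lemma ne_of_mem_openSegment (h : IsSimplePolygon v)
    (hm : m ∈ openSegment ℝ (v i) (v (i + 1))) (j : Fin n) : m ≠ v j := by
  rintro rfl
  obtain rfl | hji := eq_or_ne j i
  · exact h.apply_ne_apply_add_one j (left_mem_openSegment_iff.1 hm)
  · exact h.notMem_segment_of_mem_openSegment hji hm (left_mem_segment ℝ _ _)

lemma forall_sideAdjacent (h : IsSimplePolygon v) (hs : s ≠ 0) (hi : SideAdjacent v x s i) :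
    ∀ j, SideAdjacent v x s j :=
  forall_of_imp_add_one (fun _ => h.sideAdjacent_add_one hs) hi

end IsSimplePolygon

lemma exists_mem_openSegment_of_mem_polyBoundary (hm : m ∈ polyBoundary v) (hmv : ∀ j, m ≠ v j) :
    ∃ i, m ∈ openSegment ℝ (v i) (v (i + 1)) := by
  obtain ⟨i, hi⟩ := mem_iUnion.1 hm
  exact ⟨i, mem_openSegment_of_ne_left_right (hmv i).symm (hmv (i + 1)).symm hi⟩

lemma ae_forall_orient_ne_zero {ι : Type*} [Countable ι] {w : ι → Pt} (ha : ∀ j, a ≠ w j) :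
    ∀ᵐ p, ∀ j, orient a (w j) p ≠ 0 :=
  ae_all_iff.2 fun j => ae_orient_ne_zero (ha j)

namespace IsSimplePolygon

lemma ae_orient_edge_ne_zero (h : IsSimplePolygon v) :
    ∀ᵐ p, ∀ i, orient (v i) (v (i + 1)) p ≠ 0 :=
  ae_all_iff.2 fun i => ae_orient_ne_zero (h.apply_ne_apply_add_one i)

lemma exists_forall_sideAdjacent (h : IsSimplePolygon v) (hx : x ∉ polyBoundary v) :
    (∀ i, SideAdjacent v x 1 i) ∨ ∀ i, SideAdjacent v x (-1) i := by
  obtain ⟨m, hm, -⟩ := exists_mem_openSegment_of_mem_nhds (univ_mem (f := 𝓝 (v 0))) (v (0 + 1))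
  have hmv : m ∈ polyBoundary v := mem_iUnion.2 ⟨0, openSegment_subset_segment ℝ _ _ hm⟩
  have hne := h.ne_of_mem_openSegment hm
  obtain ⟨y, hyx, hyv, hye⟩ := exists_mem_of_ae
    (isClosed_polyBoundary v).isOpen_compl.connectedComponentIn ⟨x, mem_connectedComponentIn hx⟩
    ((ae_forall_orient_ne_zero hne).and h.ae_orient_edge_ne_zero)
  have hyB : y ∉ polyBoundary v := connectedComponentIn_subset _ _ hyx
  obtain ⟨b, ⟨hbB, hbseg⟩, hdisj⟩ :=
    exists_mem_segment_disjoint_openSegment (isClosed_polyBoundary v) hyB hmv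
  rw [segment_symm] at hbseg
  obtain ⟨k, hk⟩ := exists_mem_openSegment_of_mem_polyBoundary hbB fun j =>
    ne_of_mem_segment_of_orient_ne_zero (hne j) (hyv j) hbseg
  have hopen : openSegment ℝ b y ⊆ connectedComponentIn (polyBoundary v)ᶜ x := by
    rw [openSegment_symm]
    have hpre : IsPreconnected (insert y (openSegment ℝ y b)) :=
      (convex_openSegment y b).isPreconnected.subset_closure (subset_insert _ _) <| by
        rw [closure_openSegment]
        exact insert_subset (left_mem_segment ℝ y b) (openSegment_subset_segment ℝ y b)
    exact (subset_insert _ _).trans <| subset_connectedComponentIn_of_mem hpre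
      (insert_subset hyB hdisj.subset_compl_right) (mem_insert _ _) hyx
  have hall {s : ℝ} (hs : s ≠ 0) (hy : y ∈ side s (v k) (v (k + 1))) :
      ∀ i, SideAdjacent v x s i :=
    h.forall_sideAdjacent hs <| h.sideAdjacent_of_frequently hk <|
      (frequently_mem_openSegment_nhdsWithin_side (orient_eq_zero_of_mem_openSegment hk) hy).mono
        fun _ hp => hopen hp
  obtain hneg | hpos := (hye k).lt_or_gt
  · exact .inr (hall (by norm_num) (mem_side_neg_one.2 hneg))
  · exact .inl (hall (by norm_num) (mem_side_one.2 hpos))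

end IsSimplePolygon

end Dichotomy

section Jump

open Filter Set Topology

variable {n : ℕ} [NeZero n] {v : Fin n → Pt} {a b m x : Pt} {i : Fin n} {s : ℝ}

lemma dot2_sub_sub_neg_of_mem_openSegment (hab : a ≠ b) (hm : m ∈ openSegment ℝ a b) :
    dot2 (a - m) (b - m) < 0 := by
  obtain ⟨α, β, hα, hβ, hαβ, rfl⟩ := hm
  obtain rfl := eq_sub_of_add_eq hαβ
  have hdot : dot2 (a - ((1 - β) • a + β • b)) (b - ((1 - β) • a + β • b)) =
      -((1 - β) * β * dot2 (b - a) (b - a)) := by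
    simp only [dot2, Prod.fst_sub, Prod.snd_sub, Prod.fst_add, Prod.snd_add, Prod.smul_fst,
      Prod.smul_snd, smul_eq_mul]
    ring
  rw [hdot, neg_lt_zero]
  exact mul_pos (mul_pos hα hβ) (dot2_self_pos (sub_ne_zero.2 hab.symm))

lemma tendsto_ang_sub_nhdsWithin_side_left (hab : a ≠ b) (hm : m ∈ openSegment ℝ a b) :
    Tendsto (fun p => ang (a - p) (b - p)) (𝓝[side 1 a b] m) (𝓝 (1 / 2)) := by
  let z : Pt → ℂ := fun p => toComplex (b - p) / toComplex (a - p)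
  have him (p : Pt) : (z p).im = orient a b p / dot2 (a - p) (a - p) := by
    rw [toComplex_div_im, det2_sub_sub]
  have hdot := dot2_sub_sub_neg_of_mem_openSegment hab hm
  have ham : a - m ≠ 0 := ne_zero_of_dot2_ne_zero_left hdot.ne
  have hre : (z m).re < 0 := by
    rw [toComplex_div_re]
    exact div_neg_of_neg_of_pos hdot (dot2_self_pos ham)
  have hz : Tendsto z (𝓝[side 1 a b] m) (𝓝[{w | 0 ≤ w.im}] z m) := by
    refine tendsto_nhdsWithin_iff.2 ⟨?_, ?_⟩
    · have hcont : ContinuousAt z m :=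
        ContinuousAt.div (by fun_prop) (by fun_prop) (toComplex_ne_zero ham)
      exact hcont.mono_left nhdsWithin_le_nhds
    · filter_upwards [self_mem_nhdsWithin] with p hp
      rw [him]
      exact div_nonneg (mem_side_one.1 hp).le (add_nonneg (mul_self_nonneg _) (mul_self_nonneg _))
  have harg := (Complex.tendsto_arg_nhdsWithin_im_nonneg_of_re_neg_of_im_zero hre
    (by rw [him, orient_eq_zero_of_mem_openSegment hm, zero_div])).comp hz
  have hpi : Real.pi / (2 * Real.pi) = 1 / 2 := by field_simp
  exact hpi ▸ harg.div_const (2 * Real.pi)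

lemma tendsto_ang_sub_nhdsWithin_side_right (hab : a ≠ b) (hm : m ∈ openSegment ℝ a b) :
    Tendsto (fun p => ang (a - p) (b - p)) (𝓝[side (-1) a b] m) (𝓝 (-(1 / 2))) := by
  rw [side_neg]
  refine (tendsto_ang_sub_nhdsWithin_side_left hab.symm (by rwa [openSegment_symm])).neg.congr' ?_
  filter_upwards [self_mem_nhdsWithin] with p hp
  rw [← ang_swap (det2_sub_sub b a p ▸ (mem_side_one.1 hp).ne')]

namespace IsSimplePolygon

lemma tendsto_wind_nhdsWithin (h : IsSimplePolygon v)
    (hm : m ∈ openSegment ℝ (v i) (v (i + 1))) {S : Set Pt} {r : ℝ}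
    (hr : Tendsto (fun p => ang (v i - p) (v (i + 1) - p)) (𝓝[S] m) (𝓝 r)) :
    Tendsto (wind v) (𝓝[S] m)
      (𝓝 (r + ∑ j ∈ Finset.univ.erase i, ang (v j - m) (v (j + 1) - m))) := by
  have hrest : Tendsto (fun p => ∑ j ∈ Finset.univ.erase i, ang (v j - p) (v (j + 1) - p))
      (𝓝[S] m) (𝓝 (∑ j ∈ Finset.univ.erase i, ang (v j - m) (v (j + 1) - m))) :=
    (tendsto_finsetSum _ fun j hj => continuousAt_ang_sub
      (h.notMem_segment_of_mem_openSegment (Finset.ne_of_mem_erase hj) hm)).mono_left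
        nhdsWithin_le_nhds
  refine (hr.add hrest).congr fun p => ?_
  exact Finset.add_sum_erase _ (fun j => ang (v j - p) (v (j + 1) - p)) (Finset.mem_univ i)

lemma wind_eq_of_tendsto (h : IsSimplePolygon v) (hs : s ≠ 0) (hx : SideAdjacent v x s i)
    (hm : m ∈ openSegment ℝ (v i) (v (i + 1))) {r : ℝ}
    (hr : Tendsto (wind v) (𝓝[side s (v i) (v (i + 1))] m) (𝓝 r)) : wind v x = r := by
  have := h.nhdsWithin_side_neBot hs hm
  refine tendsto_nhds_unique (tendsto_const_nhds.congr' ?_) hr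
  filter_upwards [hx m hm] with p hp
  exact (wind_eq_of_mem_connectedComponentIn hp).symm

lemma exists_tendsto_wind (h : IsSimplePolygon v) (hm : m ∈ openSegment ℝ (v i) (v (i + 1))) :
    ∃ r, Tendsto (wind v) (𝓝[side 1 (v i) (v (i + 1))] m) (𝓝 (r + 1)) ∧
      Tendsto (wind v) (𝓝[side (-1) (v i) (v (i + 1))] m) (𝓝 r) := by
  have hne := h.apply_ne_apply_add_one i
  refine ⟨_, ?_, h.tendsto_wind_nhdsWithin hm (tendsto_ang_sub_nhdsWithin_side_right hne hm)⟩
  convert h.tendsto_wind_nhdsWithin hm (tendsto_ang_sub_nhdsWithin_side_left hne hm) using 2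
  ring

lemma exists_wind_dichotomy (h : IsSimplePolygon v) :
    ∃ r, ∀ x ∉ polyBoundary v,
      ((∀ i, SideAdjacent v x 1 i) ∧ wind v x = r + 1) ∨
        ((∀ i, SideAdjacent v x (-1) i) ∧ wind v x = r) := by
  obtain ⟨m, hm, -⟩ := exists_mem_openSegment_of_mem_nhds (univ_mem (f := 𝓝 (v 0))) (v (0 + 1))
  obtain ⟨r, hleft, hright⟩ := h.exists_tendsto_wind hm
  refine ⟨r, fun x hx => ?_⟩
  exact (h.exists_forall_sideAdjacent hx).imp
    (fun hadj => ⟨hadj, h.wind_eq_of_tendsto (by norm_num) (hadj 0) hm hleft⟩)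
    fun hadj => ⟨hadj, h.wind_eq_of_tendsto (by norm_num) (hadj 0) hm hright⟩

end IsSimplePolygon

end Jump

section Area

open MeasureTheory Set

variable {n : ℕ} [NeZero n] {v : Fin n → Pt} {a b c p : Pt}

/-- The open triangle cut out by the three sides of sign `s`; it is empty unless `s` is the sign of
the orientation of `a b c`. -/
def triangle (s : ℝ) (a b c : Pt) : Set Pt := side s a b ∩ side s b c ∩ side s c a

lemma orient_add_orient_add_orient (a b c p : Pt) :
    orient a b p + orient b c p + orient c a p = orient a b c := by
  simp only [orient, det2, Prod.fst_sub, Prod.snd_sub]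
  ring

lemma triangle_neg_one (a b c : Pt) : triangle (-1) a b c = triangle 1 a c b := by
  simp only [triangle, side_neg]
  rw [inter_comm, ← inter_assoc, inter_right_comm]

lemma measurableSet_triangle (s : ℝ) (a b c : Pt) : MeasurableSet (triangle s a b c) :=
  (((isOpen_side s a b).inter (isOpen_side s b c)).inter (isOpen_side s c a)).measurableSet

lemma triangle_one_eq_empty (h : orient a b c ≤ 0) : triangle 1 a b c = ∅ := by
  refine eq_empty_iff_forall_notMem.2 fun p ⟨⟨hab, hbc⟩, hca⟩ => ?_
  rw [mem_side_one] at hab hbc hca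
  linarith [orient_add_orient_add_orient a b c p]

lemma volume_cornerTriangle {D : ℝ} (hD : 0 ≤ D) :
    volume {p : Pt | 0 < p.1 ∧ 0 < p.2 ∧ p.1 + p.2 < D} = ENNReal.ofReal (D ^ 2 / 2) := by
  have hregion : {p : Pt | 0 < p.1 ∧ 0 < p.2 ∧ p.1 + p.2 < D} =
      regionBetween 0 (fun t => D - t) (Ioo 0 D) := by
    ext p
    simp only [regionBetween, mem_ofPred_eq, mem_Ioo, Pi.zero_apply]
    grind
  have hint : ∫ t in Ioo 0 D, ((fun t => D - t) - 0) t = D ^ 2 / 2 := by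
    rw [← integral_Ioc_eq_integral_Ioo, ← intervalIntegral.integral_of_le hD]
    simp only [Pi.sub_apply, Pi.zero_apply, sub_zero]
    rw [intervalIntegral.integral_sub (by simp) (by simp), intervalIntegral.integral_const,
      integral_id, smul_eq_mul]
    ring
  have hcont : ContinuousOn (fun t => D - t) (Icc 0 D) := by fun_prop
  rw [hregion, Measure.volume_eq_prod, volume_regionBetween_eq_integral (f := 0) integrableOn_zero
    (hcont.integrableOn_Icc.mono_set Ioo_subset_Icc_self) measurableSet_Ioo
    (fun t ht => sub_nonneg.2 ht.2.le), hint]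

lemma volume_triangle_of_orient_pos (h : 0 < orient a b c) :
    volume (triangle 1 a b c) = ENNReal.ofReal (orient a b c / 2) := by
  let f : Pt →ₗ[ℝ] Pt := Matrix.toLin (.finTwoProd ℝ) (.finTwoProd ℝ)
    !![-(a - c).2, (a - c).1; -(b - a).2, (b - a).1]
  have hf (w : Pt) : f w = (det2 (a - c) w, det2 (b - a) w) := by
    ext <;> simp [f, Matrix.toLin_finTwoProd, det2] <;> ring
  have hdet : LinearMap.det f = orient a b c := by
    simp only [f, LinearMap.det_toLin, Matrix.det_fin_two_of, orient, det2, Prod.fst_sub,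
      Prod.snd_sub]
    ring
  have hpre : (fun w => a + w) ⁻¹' triangle 1 a b c =
      f ⁻¹' {p | 0 < p.1 ∧ 0 < p.2 ∧ p.1 + p.2 < orient a b c} := by
    ext w
    have hab : orient a b (a + w) = det2 (b - a) w := by rw [orient_add, orient_left, zero_add]
    have hca : orient c a (a + w) = det2 (a - c) w := by rw [orient_add, orient_right, zero_add]
    have hsum := orient_add_orient_add_orient a b c (a + w)
    simp only [triangle, mem_preimage, mem_inter_iff, mem_side_one, mem_ofPred_eq, hf, ← hab, ← hca]
    grind
  rw [← measure_preimage_add volume a, hpre, Measure.addHaar_preimage_linearMap _ (hdet ▸ h.ne'),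
    volume_cornerTriangle h.le, hdet, abs_of_pos (inv_pos.2 h),
    ← ENNReal.ofReal_mul (inv_pos.2 h).le]
  congr 1
  field_simp

lemma volume_triangle_one (a b c : Pt) :
    volume (triangle 1 a b c) = ENNReal.ofReal (max (orient a b c) 0 / 2) := by
  obtain h | h := le_or_gt (orient a b c) 0
  · rw [triangle_one_eq_empty h, measure_empty, max_eq_right h, zero_div, ENNReal.ofReal_zero]
  · rw [volume_triangle_of_orient_pos h, max_eq_left h.le]

/-- The winding number of the triangle `a b c` as a sum of indicator functions. -/
noncomputable def triangleSign (a b c : Pt) : Pt → ℝ :=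
  (triangle 1 a b c).indicator 1 - (triangle (-1) a b c).indicator 1

lemma integrable_indicator_triangle (a b c : Pt) :
    Integrable ((triangle 1 a b c).indicator (1 : Pt → ℝ)) := by
  refine (integrable_indicator_iff (measurableSet_triangle 1 a b c)).2 (integrableOn_const ?_)
  rw [volume_triangle_one]
  exact ENNReal.ofReal_ne_top

lemma integral_indicator_triangle (a b c : Pt) :
    ∫ p, (triangle 1 a b c).indicator (1 : Pt → ℝ) p = max (orient a b c) 0 / 2 := by
  rw [integral_indicator_one (measurableSet_triangle 1 a b c), Measure.real, volume_triangle_one,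
    ENNReal.toReal_ofReal (by positivity)]

lemma integrable_triangleSign (a b c : Pt) : Integrable (triangleSign a b c) := by
  rw [triangleSign, triangle_neg_one]
  exact (integrable_indicator_triangle a b c).sub (integrable_indicator_triangle a c b)

lemma integral_triangleSign (a b c : Pt) : ∫ p, triangleSign a b c p = orient a b c / 2 := by
  have hswap : orient a c b = -orient a b c := by rw [← orient_rotate, orient_swap, orient_rotate]
  rw [triangleSign, triangle_neg_one]
  simp only [Pi.sub_apply]
  rw [integral_sub (integrable_indicator_triangle a b c) (integrable_indicator_triangle a c b),
    integral_indicator_triangle, integral_indicator_triangle, hswap, ← sub_div,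
    max_zero_sub_max_neg_zero_eq_self]

lemma exists_ang_add_ang_add_ang_eq_intCast (hab : orient a b p ≠ 0) (hbc : orient b c p ≠ 0)
    (hca : orient c a p ≠ 0) : ∃ k : ℤ,
    ang (a - p) (b - p) + ang (b - p) (c - p) + ang (c - p) (a - p) = k := by
  rw [← det2_sub_sub] at hab hbc hca
  obtain ⟨k, hk⟩ := exists_ang_eq_add (ne_zero_of_det2_ne_zero_left hab)
    (ne_zero_of_det2_ne_zero_left hbc) (ne_zero_of_det2_ne_zero_left hca)
  refine ⟨-k, ?_⟩
  rw [ang_swap hca] at hk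
  push_cast
  linarith

lemma ang_add_ang_add_ang_eq (hab : orient a b p ≠ 0) (hbc : orient b c p ≠ 0)
    (hca : orient c a p ≠ 0) :
    ang (a - p) (b - p) + ang (b - p) (c - p) + ang (c - p) (a - p) = triangleSign a b c p := by
  have hrange {x y : Pt} (h : orient x y p ≠ 0) :
      0 < orient x y p ∧ 0 < ang (x - p) (y - p) ∧ ang (x - p) (y - p) < 1 / 2 ∨
        orient x y p < 0 ∧ -(1 / 2) < ang (x - p) (y - p) ∧ ang (x - p) (y - p) < 0 := by
    rw [← det2_sub_sub] at h ⊢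
    obtain hneg | hpos := h.lt_or_gt
    · exact .inr ⟨hneg, neg_half_lt_ang _ _, ang_neg_of_det2_neg hneg⟩
    · exact .inl ⟨hpos, ang_pos_of_det2_pos hpos, ang_lt_half_of_det2_ne_zero h⟩
  obtain ⟨k, hk⟩ := exists_ang_add_ang_add_ang_eq_intCast hab hbc hca
  have hsign : triangleSign a b c p =
      (if 0 < orient a b p ∧ 0 < orient b c p ∧ 0 < orient c a p then 1 else 0) -
        if orient a b p < 0 ∧ orient b c p < 0 ∧ orient c a p < 0 then 1 else 0 := by
    classical
    simp only [triangleSign, Pi.sub_apply, triangle, indicator_apply, mem_inter_iff, mem_side_one,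
      mem_side_neg_one, Pi.one_apply, and_assoc]
  have hrab := hrange hab
  have hrbc := hrange hbc
  have hrca := hrange hca
  have hk_lt : k < 2 := by exact_mod_cast (by grind : (k : ℝ) < 2)
  have hlt_k : -2 < k := by exact_mod_cast (by grind : (-2 : ℝ) < k)
  rw [hsign]
  interval_cases k <;> push_cast at hk <;> grind

lemma wind_ae_eq_sum_triangleSign (hv : ∀ i, v i ≠ v (i + 1)) (hc : ∀ i, c ≠ v i) :
    wind v =ᵐ[volume] fun p => ∑ i, triangleSign c (v i) (v (i + 1)) p := by
  filter_upwards [ae_all_iff.2 fun i => ae_orient_ne_zero (hc i),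
    ae_all_iff.2 fun i => ae_orient_ne_zero (hv i)] with p hcp hvp
  have hterm (i : Fin n) : triangleSign c (v i) (v (i + 1)) p =
      ang (c - p) (v i - p) + ang (v i - p) (v (i + 1) - p) - ang (c - p) (v (i + 1) - p) := by
    have hswap : orient (v (i + 1)) c p ≠ 0 := by
      rw [orient_swap]
      exact neg_ne_zero.2 (hcp (i + 1))
    have hang : ang (v (i + 1) - p) (c - p) = -ang (c - p) (v (i + 1) - p) :=
      ang_swap (det2_sub_sub c (v (i + 1)) p ▸ hcp (i + 1))
    rw [← ang_add_ang_add_ang_eq (hcp i) (hvp i) hswap, hang, ← sub_eq_add_neg]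
  simp only [hterm, Finset.sum_sub_distrib, Finset.sum_add_distrib]
  rw [sum_comp_add_one fun i => ang (c - p) (v i - p), add_sub_cancel_left, wind]

lemma signedArea2_eq_sum_orient (v : Fin n → Pt) (c : Pt) :
    signedArea2 v = ∑ i, orient c (v i) (v (i + 1)) := by
  have hterm (a b : Pt) : orient c a b = det2 a b + (det2 c a - det2 c b) := by
    simp only [orient, det2, Prod.fst_sub, Prod.snd_sub]
    ring
  simp only [hterm, Finset.sum_add_distrib, Finset.sum_sub_distrib]
  rw [sum_comp_add_one fun i => det2 c (v i), sub_self, add_zero, signedArea2]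

theorem integral_wind (hv : ∀ i, v i ≠ v (i + 1)) : ∫ p, wind v p = signedArea2 v / 2 := by
  obtain ⟨c, hc⟩ := (finite_range v).exists_notMem
  have hc (i : Fin n) : c ≠ v i := fun h => hc ⟨i, h.symm⟩
  rw [integral_congr_ae (wind_ae_eq_sum_triangleSign hv hc),
    integral_finsetSum _ fun i _ => integrable_triangleSign c (v i) (v (i + 1)),
    signedArea2_eq_sum_orient v c, Finset.sum_div]
  exact Finset.sum_congr rfl fun i _ => integral_triangleSign c (v i) (v (i + 1))

end Area

section Interior

open Bornology Filter MeasureTheory Set Topology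

lemma isOpen_setOf_connectedComponentIn {X : Type*} [TopologicalSpace X] [LocallyConnectedSpace X]
    {F : Set X} (hF : IsOpen F) (P : Set X → Prop) :
    IsOpen {x | x ∈ F ∧ P (connectedComponentIn F x)} := by
  refine isOpen_iff_mem_nhds.2 fun x ⟨hx, hP⟩ => ?_
  filter_upwards [hF.connectedComponentIn.mem_nhds (mem_connectedComponentIn hx)] with y hy
  exact ⟨connectedComponentIn_subset F x hy, connectedComponentIn_eq hy ▸ hP⟩

lemma isBounded_convexHull_range {ι : Type*} [Finite ι] (v : ι → Pt) :
    IsBounded (convexHull ℝ (range v)) :=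
  isBounded_convexHull.2 (finite_range v).isBounded

variable {n : ℕ} [NeZero n] {v : Fin n → Pt} {m p x : Pt} {i : Fin n} {s : ℝ}

lemma isOpen_polyInterior (v : Fin n → Pt) : IsOpen (polyInterior v) :=
  isOpen_setOf_connectedComponentIn (isClosed_polyBoundary v).isOpen_compl IsBounded

lemma notMem_polyRegion_iff : x ∉ polyRegion v ↔ x ∉ polyBoundary v ∧ x ∉ polyInterior v := by
  rw [polyRegion, mem_union, not_or]

lemma isClosed_polyRegion (v : Fin n → Pt) : IsClosed (polyRegion v) := by
  have hcompl : (polyRegion v)ᶜ = {x | x ∈ (polyBoundary v)ᶜ ∧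
      ¬ IsBounded (connectedComponentIn (polyBoundary v)ᶜ x)} := by
    ext x
    rw [mem_compl_iff, notMem_polyRegion_iff]
    exact and_congr_right fun hx => not_congr (and_iff_right hx)
  exact isOpen_compl_iff.1 <| hcompl ▸
    isOpen_setOf_connectedComponentIn (isClosed_polyBoundary v).isOpen_compl (¬ IsBounded ·)

namespace IsSimplePolygon

lemma ae_notMem_polyBoundary (h : IsSimplePolygon v) : ∀ᵐ p, p ∉ polyBoundary v := by
  filter_upwards [h.ae_orient_edge_ne_zero] with p hp
  exact notMem_polyBoundary_iff.2 fun i hi => hp i (orient_eq_zero_of_mem_segment hi)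

lemma sideAdjacent_and_wind_eq (h : IsSimplePolygon v) (hccw : IsCCW v) (hx : x ∉ polyBoundary v) :
    ((∀ i, SideAdjacent v x 1 i) ∧ wind v x = 1) ∨
      ((∀ i, SideAdjacent v x (-1) i) ∧ wind v x = 0) := by
  obtain ⟨r, hr⟩ := h.exists_wind_dichotomy
  suffices hr0 : r = 0 by simpa [hr0] using hr x hx
  obtain ⟨y, hy⟩ := Filter.nonempty_of_mem (isBounded_def.1 (isBounded_convexHull_range v))
  have hwind := wind_eq_zero_of_notMem_convexHull hy
  obtain ⟨-, hry⟩ | ⟨-, hry⟩ := hr y fun hyB => hy (polyBoundary_subset_convexHull v hyB)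
  · have hnonpos : ∀ᵐ p, wind v p ≤ 0 := by
      filter_upwards [h.ae_notMem_polyBoundary] with p hp
      obtain ⟨-, hrp⟩ | ⟨-, hrp⟩ := hr p hp <;> linarith
    have hint : ∫ p, wind v p ≤ 0 := integral_nonpos_of_ae hnonpos
    rw [integral_wind h.apply_ne_apply_add_one] at hint
    have hpos : 0 < signedArea2 v := hccw
    linarith
  · exact hry.symm.trans hwind

lemma mem_polyInterior_iff (h : IsSimplePolygon v) (hccw : IsCCW v) :
    x ∈ polyInterior v ↔ x ∉ polyBoundary v ∧ wind v x = 1 := by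
  refine and_congr_right fun hx => ⟨fun hbdd => ?_, fun hwind => ?_⟩
  · refine (h.sideAdjacent_and_wind_eq hccw hx).elim And.right fun ⟨hadj, _⟩ => ?_
    refine absurd ((hbdd.union (isBounded_convexHull_range v)).subset fun y _ => ?_)
      (NormedSpace.unbounded_univ ℝ Pt)
    by_cases hy : y ∈ convexHull ℝ (range v)
    · exact .inr hy
    have hwind := wind_eq_zero_of_notMem_convexHull hy
    obtain ⟨-, hy1⟩ | ⟨hadj', -⟩ := h.sideAdjacent_and_wind_eq hccw
      fun hyB => hy (polyBoundary_subset_convexHull v hyB)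
    · exact absurd (hy1.symm.trans hwind) one_ne_zero
    · exact .inl ((hadj 0).mem_connectedComponentIn h (by norm_num) (hadj' 0))
  · refine (isBounded_convexHull_range v).subset fun y hy => by_contra fun hyH => ?_
    have hy0 := wind_eq_zero_of_notMem_convexHull hyH
    rw [wind_eq_of_mem_connectedComponentIn hy, hwind] at hy0
    exact one_ne_zero hy0

lemma notMem_polyRegion_iff_wind_eq_zero (h : IsSimplePolygon v) (hccw : IsCCW v) :
    x ∉ polyRegion v ↔ x ∉ polyBoundary v ∧ wind v x = 0 := by
  rw [notMem_polyRegion_iff, h.mem_polyInterior_iff hccw]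
  refine and_congr_right fun hx => ?_
  obtain ⟨-, hwind⟩ | ⟨-, hwind⟩ := h.sideAdjacent_and_wind_eq hccw hx <;> simp [hx, hwind]

lemma eventually_notMem_polyBoundary (h : IsSimplePolygon v)
    (hm : m ∈ openSegment ℝ (v i) (v (i + 1))) :
    ∀ᶠ p in 𝓝[side s (v i) (v (i + 1))] m, p ∉ polyBoundary v := by
  filter_upwards [self_mem_nhdsWithin, mem_nhdsWithin_of_mem_nhds
    (eventually_notMem_segment (P := (· ≠ i)) fun j hj =>
      h.notMem_segment_of_mem_openSegment hj hm)] with p hps hp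
  refine notMem_polyBoundary_iff.2 fun j hj => ?_
  obtain rfl | hji := eq_or_ne j i
  exacts [notMem_side_of_mem_segment hj hps, hp j hji hj]

lemma eventually_wind_eq (h : IsSimplePolygon v) (hccw : IsCCW v)
    (hm : m ∈ openSegment ℝ (v i) (v (i + 1))) :
    (∀ᶠ p in 𝓝[side 1 (v i) (v (i + 1))] m, wind v p = 1) ∧
      ∀ᶠ p in 𝓝[side (-1) (v i) (v (i + 1))] m, wind v p = 0 := by
  have hmem (s : ℝ) :
      ∀ᶠ p in 𝓝[side s (v i) (v (i + 1))] m, wind v p ∈ ({0, 1} : Set ℝ) := by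
    filter_upwards [h.eventually_notMem_polyBoundary hm] with p hp
    exact (h.sideAdjacent_and_wind_eq hccw hp).elim (fun hw => .inr hw.2) fun hw => .inl hw.2
  have hclosed : IsClosed ({0, 1} : Set ℝ) := (toFinite _).isClosed
  obtain ⟨r, hleft, hright⟩ := h.exists_tendsto_wind hm
  have := h.nhdsWithin_side_neBot one_ne_zero hm
  have := h.nhdsWithin_side_neBot (neg_ne_zero.2 one_ne_zero) hm
  have hr : r = 0 := by
    have hr₁ := hclosed.mem_of_tendsto hleft (hmem 1)
    have hr₀ := hclosed.mem_of_tendsto hright (hmem (-1))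
    grind
  rw [hr, zero_add] at hleft
  rw [hr] at hright
  constructor
  · filter_upwards [hmem 1, hleft.eventually_ne zero_ne_one.symm] with p hp hne
    exact hp.resolve_left hne
  · filter_upwards [hmem (-1), hright.eventually_ne zero_ne_one] with p hp hne
    exact hp.resolve_right hne

lemma eventually_mem_polyInterior (h : IsSimplePolygon v) (hccw : IsCCW v)
    (hm : m ∈ openSegment ℝ (v i) (v (i + 1))) :
    ∀ᶠ p in 𝓝[side 1 (v i) (v (i + 1))] m, p ∈ polyInterior v := by
  filter_upwards [h.eventually_notMem_polyBoundary hm,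
    (h.eventually_wind_eq hccw hm).1] with p hp hw
  exact (h.mem_polyInterior_iff hccw).2 ⟨hp, hw⟩

lemma eventually_notMem_polyRegion (h : IsSimplePolygon v) (hccw : IsCCW v)
    (hm : m ∈ openSegment ℝ (v i) (v (i + 1))) :
    ∀ᶠ p in 𝓝[side (-1) (v i) (v (i + 1))] m, p ∉ polyRegion v := by
  filter_upwards [h.eventually_notMem_polyBoundary hm,
    (h.eventually_wind_eq hccw hm).2] with p hp hw
  exact (h.notMem_polyRegion_iff_wind_eq_zero hccw).2 ⟨hp, hw⟩

lemma polyBoundary_subset_of_forall_openSegment {F : Set Pt} (hF : IsClosed F)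
    (hsub : ∀ i, openSegment ℝ (v i) (v (i + 1)) ⊆ F) : polyBoundary v ⊆ F :=
  iUnion_subset fun i => by
    rw [← closure_openSegment]
    exact hF.closure_subset_iff.2 (hsub i)

lemma polyRegion_subset_closure_polyInterior (h : IsSimplePolygon v) (hccw : IsCCW v) :
    polyRegion v ⊆ closure (polyInterior v) := by
  refine union_subset (polyBoundary_subset_of_forall_openSegment isClosed_closure fun i m hm => ?_)
    subset_closure
  have := h.nhdsWithin_side_neBot one_ne_zero hm
  exact mem_closure_of_tendsto (tendsto_id.mono_left nhdsWithin_le_nhds)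
    (h.eventually_mem_polyInterior hccw hm)

lemma interior_polyRegion (h : IsSimplePolygon v) (hccw : IsCCW v) :
    interior (polyRegion v) = polyInterior v := by
  refine subset_antisymm (fun x hx => ?_) (interior_maximal subset_union_right
    (isOpen_polyInterior v))
  refine (interior_subset hx).resolve_left fun hxB => ?_
  have hclosure : polyBoundary v ⊆ closure (polyRegion v)ᶜ := by
    refine polyBoundary_subset_of_forall_openSegment isClosed_closure fun i m hm => ?_
    have := h.nhdsWithin_side_neBot (neg_ne_zero.2 one_ne_zero) hm
    exact mem_closure_of_tendsto (tendsto_id.mono_left nhdsWithin_le_nhds)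
      (h.eventually_notMem_polyRegion hccw hm)
  rw [closure_compl] at hclosure
  exact hclosure hxB hx

end IsSimplePolygon

end Interior

section ExtremeVertex

open Filter Metric Set Topology

variable {n : ℕ} [NeZero n] {v : Fin n → Pt} {a b : Pt} {i : Fin n}

lemma dot2_mul_dot2_sub_dot2_mul_dot2 (a b c d : Pt) :
    dot2 a c * dot2 b d - dot2 a d * dot2 b c = det2 a b * det2 c d := by
  simp only [dot2, det2]
  ring

lemma dot2_lt_dot2_self (hab : a ≠ b) (hle : dot2 a a ≤ dot2 b b) : dot2 b a < dot2 b b := by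
  have hpos := dot2_self_pos (sub_ne_zero.2 hab)
  simp only [dot2, Prod.fst_sub, Prod.snd_sub] at *
  linarith

lemma notMem_convexHull_of_dot2_lt {ι : Type*} {w : ι → Pt} {r : ℝ} (hw : ∀ i, dot2 a (w i) ≤ r)
    (hb : r < dot2 a b) : b ∉ convexHull ℝ (range w) := by
  have hconvex : Convex ℝ {z | dot2 a z ≤ r} := convex_halfSpace_le
    ⟨dot2_add_right a, fun t z => dot2_smul_right t a z⟩ r
  exact fun hmem => hb.not_ge (convexHull_min (range_subset_iff.2 hw) hconvex hmem)

namespace IsSimplePolygon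

lemma eventually_mem_polyInterior_of_cornerSide (h : IsSimplePolygon v) (hccw : IsCCW v)
    (i : Fin n) : ∀ᶠ p in 𝓝[cornerSide v 1 i] v (i + 1), p ∈ polyInterior v := by
  obtain ⟨ε, hε, hsub⟩ := h.exists_ball_inter_cornerSide_subset 1 i
  have hconn := h.isPreconnected_ball_inter_cornerSide (i := i) one_ne_zero hε
  obtain ⟨m, hm, hmε⟩ := exists_mem_openSegment_of_mem_nhds (ball_mem_nhds (v (i + 1)) hε) (v i)
  rw [openSegment_symm] at hm
  have := h.nhdsWithin_side_neBot one_ne_zero hm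
  obtain ⟨p, ⟨hpw, hpc⟩, hpε⟩ := (((h.eventually_wind_eq hccw hm).1.and
    (eventually_mem_cornerSide_left hm)).and
      (mem_nhdsWithin_of_mem_nhds (isOpen_ball.mem_nhds hmε))).exists
  filter_upwards [self_mem_nhdsWithin,
    mem_nhdsWithin_of_mem_nhds (ball_mem_nhds _ hε)] with q hqc hq
  refine (h.mem_polyInterior_iff hccw).2 ⟨hsub ⟨hq, hqc⟩, ?_⟩
  rw [wind_eq_of_isPreconnected hconn hsub ⟨hq, hqc⟩ ⟨hpε, hpc⟩, hpw]

lemma turn_nonneg_of_forall_dot2_le (h : IsSimplePolygon v) (hccw : IsCCW v)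
    (hmax : ∀ j, dot2 a (v j) ≤ dot2 a (v (i + 1))) (hlt : dot2 a (v i) < dot2 a (v (i + 1))) :
    0 ≤ turn v i := by
  by_contra! hturn
  let w := v (i + 1) - v i - (v (i + 1 + 1) - v (i + 1))
  have hw : 0 < dot2 a w := by
    simp only [w, dot2_sub_right]
    linarith [hmax (i + 1 + 1)]
  have hdet : det2 (v (i + 1) - v i) w = -turn v i := by
    simp only [w, turn, orient, det2, Prod.fst_sub, Prod.snd_sub]
    ring
  have hcorner : ∀ᶠ t in 𝓝[>] (0 : ℝ), v (i + 1) + t • w ∈ cornerSide v 1 i := by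
    filter_upwards [self_mem_nhdsWithin] with t ht
    rw [cornerSide, if_neg (by rw [one_mul]; exact hturn.not_gt)]
    refine .inl (mem_side_one.2 ?_)
    rw [orient_add, orient_right, zero_add, det2_smul_right, hdet]
    exact mul_pos ht (neg_pos.2 hturn)
  obtain ⟨t, htint, ht⟩ := ((tendsto_nhdsWithin_iff.2 ⟨tendsto_add_smul_nhdsGT (v (i + 1)) w,
    hcorner⟩).eventually (h.eventually_mem_polyInterior_of_cornerSide hccw i)).and
      self_mem_nhdsWithin |>.exists
  have hout : v (i + 1) + t • w ∉ convexHull ℝ (range v) := by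
    refine notMem_convexHull_of_dot2_lt hmax ?_
    rw [dot2_add_right, dot2_smul_right]
    exact lt_add_of_pos_right _ (mul_pos ht hw)
  have hwind := ((h.mem_polyInterior_iff hccw).1 htint).2
  rw [wind_eq_zero_of_notMem_convexHull hout] at hwind
  exact zero_ne_one hwind

lemma turn_pos_of_forall_dot2_le (h : IsSimplePolygon v) (hccw : IsCCW v)
    (hmax : ∀ j, dot2 (v j) (v j) ≤ dot2 (v (i + 1)) (v (i + 1))) : 0 < turn v i := by
  let e := v (i + 1) - v i
  let f := v (i + 1 + 1) - v (i + 1)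
  have hle (j : Fin n) : dot2 (v (i + 1)) (v j) ≤ dot2 (v (i + 1)) (v (i + 1)) := by
    obtain hj | hj := eq_or_ne (v j) (v (i + 1))
    exacts [hj ▸ le_rfl, (dot2_lt_dot2_self hj (hmax j)).le]
  have hlt := dot2_lt_dot2_self (h.apply_ne_apply_add_one i) (hmax i)
  have he : 0 < dot2 (v (i + 1)) e := by
    rw [dot2_sub_right]
    exact sub_pos.2 hlt
  have hf : dot2 (v (i + 1)) f < 0 := by
    rw [dot2_sub_right]
    exact sub_neg.2 (dot2_lt_dot2_self (h.apply_ne_apply_add_one (i + 1)).symm (hmax _))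
  refine (h.turn_nonneg_of_forall_dot2_le hccw hle hlt).lt_of_ne' fun hzero => ?_
  have hdet : det2 e f = 0 := (det2_sub_sub_eq_orient _ _ _).trans hzero
  obtain ⟨u, hue, huf⟩ := h.exists_dot2_edges_pos i
  have hid := dot2_mul_dot2_sub_dot2_mul_dot2 u (v (i + 1)) e f
  rw [hdet, mul_zero] at hid
  linarith [mul_neg_of_pos_of_neg hue hf, mul_pos huf he]

end IsSimplePolygon

end ExtremeVertex

section Umlaufsatz

open Finset

variable {a b c d : Pt} {V : ℕ → Pt} {i j s l k m : ℕ}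

lemma ang_neg_add_ang_of_det2_pos (h : 0 < det2 a b) : ang b (-a) + ang a b = 1 / 2 := by
  have ha : a ≠ 0 := ne_zero_of_det2_ne_zero_left h.ne'
  have hb : b ≠ 0 :=
    ne_zero_of_det2_ne_zero_left (b := a) (by rw [det2_swap]; exact neg_ne_zero.2 h.ne')
  have h' : 0 < det2 b (-a) := by
    rwa [← neg_one_smul ℝ a, det2_smul_right, det2_swap, neg_one_mul, neg_neg]
  obtain ⟨z, hz⟩ := exists_ang_eq_add ha hb (neg_ne_zero.2 ha)
  rw [ang_self_neg ha] at hz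
  have hz0 : (z : ℝ) = 0 := intCast_eq_zero_of_abs_lt_one <| abs_lt.2
    ⟨by linarith [ang_le_half a b, ang_le_half b (-a)],
      by linarith [ang_pos_of_det2_pos h, ang_pos_of_det2_pos h']⟩
  linarith

lemma sum_ang_of_dot2_pos {u : Pt} {W : ℕ → Pt} (hW : ∀ j ≤ k, 0 < dot2 u (W j)) :
    ∑ j ∈ range k, ang (W j) (W (j + 1)) = ang (W 0) (W k) := by
  rw [ang_eq_sub_of_dot2_pos (hW 0 k.zero_le) (hW k le_rfl),
    ← sum_range_sub (fun j => ang u (W j))]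
  refine sum_congr rfl fun j hj => ?_
  have hjk := mem_range.1 hj
  exact ang_eq_sub_of_dot2_pos (hW j hjk.le) (hW (j + 1) hjk)

open scoped Pointwise in
lemma exists_dot2_pos_of_disjoint_segment (h : Disjoint (segment ℝ a b) (segment ℝ c d)) :
    ∃ u, ∀ x ∈ segment ℝ a b, ∀ y ∈ segment ℝ c d, 0 < dot2 u (y - x) := by
  have hconvex : Convex ℝ (segment ℝ c d - segment ℝ a b) :=
    (convex_segment c d).sub (convex_segment a b)
  have hclosed : IsClosed (segment ℝ c d - segment ℝ a b) := by
    rw [sub_eq_add_neg]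
    exact ((isCompact_segment c d).add (isCompact_segment a b).neg).isClosed
  have hzero : (0 : Pt) ∉ segment ℝ c d - segment ℝ a b := by
    rintro ⟨y, hy, x, hx, hyx⟩
    exact Set.disjoint_left.1 h hx (sub_eq_zero.1 hyx ▸ hy)
  obtain ⟨u, hu⟩ := exists_dot2_pos_of_isClosed_of_convex hconvex hclosed hzero
  refine ⟨u, fun x hx y hy => ?_⟩
  simpa only [sub_zero] using hu _ (Set.sub_mem_sub hy hx)

/-- The angle by which the secant from `V i` to `V j` turns when its end advances to
`V (j + 1)`. -/
noncomputable def endAng (V : ℕ → Pt) (i j : ℕ) : ℝ := ang (V j - V i) (V (j + 1) - V i)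

/-- The angle by which the secant from `V i` to `V j` turns when its start advances to
`V (i + 1)`. -/
noncomputable def startAng (V : ℕ → Pt) (i j : ℕ) : ℝ := ang (V j - V i) (V j - V (i + 1))

/-- The exterior angle of the polyline `V` at the vertex `V (i + 1)`. -/
noncomputable def extAng (V : ℕ → Pt) (i : ℕ) : ℝ :=
  ang (V (i + 1) - V i) (V (i + 2) - V (i + 1))

lemma endAng_add_startAng
    (h : Disjoint (segment ℝ (V i) (V (i + 1))) (segment ℝ (V j) (V (j + 1)))) :
    endAng V i j + startAng V i (j + 1) = startAng V i j + endAng V (i + 1) j := by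
  obtain ⟨u, hu⟩ := exists_dot2_pos_of_disjoint_segment h
  have hij := hu _ (left_mem_segment ..) _ (left_mem_segment ..)
  have hij' := hu _ (left_mem_segment ..) _ (right_mem_segment ..)
  have hi'j := hu _ (right_mem_segment ..) _ (left_mem_segment ..)
  have hi'j' := hu _ (right_mem_segment ..) _ (right_mem_segment ..)
  exact (ang_add_of_dot2_pos hij hij' hi'j').trans (ang_add_of_dot2_pos hij hi'j hi'j').symm

lemma endAng_add_sum_startAng (hsl : s ≤ l) (hdisj : ∀ i, s ≤ i → i < l →
      Disjoint (segment ℝ (V i) (V (i + 1))) (segment ℝ (V j) (V (j + 1)))) :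
    endAng V s j + ∑ i ∈ Ico s l, startAng V i (j + 1) =
      ∑ i ∈ Ico s l, startAng V i j + endAng V l j := by
  induction l, hsl using Nat.le_induction with
  | base => simp only [Ico_self, sum_empty, zero_add, add_zero]
  | succ l hsl ih =>
    have hl := endAng_add_startAng (hdisj l hsl l.lt_succ_self)
    rw [sum_Ico_succ_top hsl, sum_Ico_succ_top hsl]
    linarith [ih fun i hsi hil => hdisj i hsi (hil.trans l.lt_succ_self)]

lemma endAng_add_startAng_eq_extAng
    (h : ∃ u, 0 < dot2 u (V (i + 1) - V i) ∧ 0 < dot2 u (V (i + 2) - V (i + 1))) :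
    endAng V i (i + 1) + startAng V i (i + 2) = extAng V i := by
  obtain ⟨u, hu, hu'⟩ := h
  refine ang_add_of_dot2_pos hu ?_ hu'
  rw [← sub_add_sub_cancel', dot2_add_right]
  exact add_pos hu hu'

lemma sum_extAng_eq (hfold : ∀ i, ∃ u, 0 < dot2 u (V (i + 1) - V i) ∧
      0 < dot2 u (V (i + 2) - V (i + 1)))
    (hdisj : ∀ i j, i + 1 < j → j ≤ k →
      Disjoint (segment ℝ (V i) (V (i + 1))) (segment ℝ (V j) (V (j + 1)))) :
    ∑ i ∈ range k, extAng V i =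
      ∑ j ∈ range k, endAng V 0 (j + 1) + ∑ i ∈ range k, startAng V i (k + 1) := by
  induction k with
  | zero => simp only [range_zero, sum_empty, add_zero]
  | succ k ih =>
    have hstrip := endAng_add_sum_startAng (V := V) (j := k + 1) k.zero_le
      fun i _ hi => hdisj i (k + 1) (by omega) le_rfl
    rw [Nat.Ico_zero_eq_range] at hstrip
    rw [sum_range_succ, sum_range_succ, sum_range_succ _ k]
    linarith [ih fun i j hij hj => hdisj i j hij (by omega),
      endAng_add_startAng_eq_extAng (hfold k)]

lemma startAng_zero_add_endAng_one (hperiod : ∀ k, V (k + (m + 2)) = V k)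
    (h : ∃ u, 0 < dot2 u (V (m + 2) - V (m + 1)) ∧ 0 < dot2 u (V (m + 3) - V (m + 2))) :
    startAng V 0 (m + 1) + endAng V 1 (m + 1) = extAng V (m + 1) := by
  have h0 : V (m + 2) = V 0 := by simpa only [zero_add] using hperiod 0
  have h1 : V (m + 3) = V 1 := by rw [← hperiod 1, add_comm 1]
  obtain ⟨u, hu, hu'⟩ := h
  rw [startAng, endAng, extAng, ← ang_neg_neg (V (m + 1 + 1) - _), h0, h1, neg_sub, neg_sub]
  rw [h0] at hu hu'
  rw [h1] at hu'
  refine ang_add_of_dot2_pos (u := -u) ?_ ?_ ?_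
  · rwa [dot2_neg_left, ← dot2_neg_right, neg_sub]
  · rw [dot2_neg_left, ← dot2_neg_right, neg_sub, ← sub_add_sub_cancel', dot2_add_right]
    exact add_pos hu hu'
  · rwa [dot2_neg_left, ← dot2_neg_right, neg_sub]

lemma sum_extAng_eq_of_periodic (hm : 1 ≤ m) (hperiod : ∀ k, V (k + (m + 2)) = V k)
    (hfold : ∀ i, ∃ u, 0 < dot2 u (V (i + 1) - V i) ∧ 0 < dot2 u (V (i + 2) - V (i + 1)))
    (hdisj : ∀ i j, i + 1 < j → j ≤ i + m →
      Disjoint (segment ℝ (V i) (V (i + 1))) (segment ℝ (V j) (V (j + 1)))) :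
    ∑ i ∈ range (m + 2), extAng V i = ∑ j ∈ range m, endAng V 0 (j + 1) +
      ∑ i ∈ range m, startAng V (i + 1) (m + 2) + 2 * extAng V (m + 1) := by
  have hfan := sum_extAng_eq hfold fun i j hij (hj : j ≤ m) => hdisj i j hij (by omega)
  have hstrip := endAng_add_sum_startAng (V := V) (j := m + 1) hm
    fun i hi him => hdisj i (m + 1) (by omega) (by omega)
  have hcorner := startAng_zero_add_endAng_one hperiod (hfold (m + 1))
  have hlast := endAng_add_startAng_eq_extAng (hfold m)
  have hrow : ∑ i ∈ range m, startAng V i (m + 1) =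
      startAng V 0 (m + 1) + ∑ i ∈ Ico 1 m, startAng V i (m + 1) := by
    rw [range_eq_Ico, sum_eq_sum_Ico_succ_bot hm]
  have hrow' : ∑ i ∈ range m, startAng V (i + 1) (m + 2) =
      ∑ i ∈ Ico 1 m, startAng V i (m + 2) + startAng V m (m + 2) := by
    rw [← sum_Ico_succ_top hm, range_eq_Ico, sum_Ico_add' (fun i => startAng V i (m + 2))]
  rw [sum_range_succ, sum_range_succ]
  linarith

lemma sum_extAng_eq_one (hm : 1 ≤ m) (hperiod : ∀ k, V (k + (m + 2)) = V k)
    (hfold : ∀ i, ∃ u, 0 < dot2 u (V (i + 1) - V i) ∧ 0 < dot2 u (V (i + 2) - V (i + 1)))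
    (hdisj : ∀ i j, i + 1 < j → j ≤ i + m →
      Disjoint (segment ℝ (V i) (V (i + 1))) (segment ℝ (V j) (V (j + 1))))
    {w : Pt} (hw : ∀ j ≤ m, 0 < dot2 w (V (j + 1) - V 0))
    (hturn : 0 < det2 (V 0 - V (m + 1)) (V 1 - V 0)) :
    ∑ i ∈ range (m + 2), extAng V i = 1 := by
  have h0 : V (m + 2) = V 0 := by simpa only [zero_add] using hperiod 0
  have h1 : V (m + 3) = V 1 := by rw [← hperiod 1, add_comm 1]
  have hend : ∑ j ∈ range m, endAng V 0 (j + 1) = ang (V 1 - V 0) (V (m + 1) - V 0) :=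
    sum_ang_of_dot2_pos (W := fun j => V (j + 1) - V 0) hw
  have hstart : ∑ i ∈ range m, startAng V (i + 1) (m + 2) =
      ∑ j ∈ range m, endAng V 0 (j + 1) := by
    refine sum_congr rfl fun i _ => ?_
    rw [startAng, h0, ← ang_neg_neg, neg_sub, neg_sub, endAng]
  have hext : ang (V 1 - V 0) (V (m + 1) - V 0) + extAng V (m + 1) = 1 / 2 := by
    change _ + ang (V (m + 2) - V (m + 1)) (V (m + 3) - V (m + 2)) = _
    rw [h0, h1, ← ang_neg_add_ang_of_det2_pos hturn, neg_sub]
  rw [sum_extAng_eq_of_periodic hm hperiod hfold hdisj, hstart, hend]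
  linarith

namespace IsSimplePolygon

variable {n : ℕ} [NeZero n] {v : Fin n → Pt}

open scoped Fin.CommRing in
lemma disjoint_segment_natCast (h : IsSimplePolygon v) (q : Fin n) (hij : i + 1 < j)
    (hji : j + 1 < i + n) :
    Disjoint (segment ℝ (v (q + i)) (v (q + i + 1))) (segment ℝ (v (q + j)) (v (q + j + 1))) := by
  have hne {x y : ℕ} (hxy : x < y) (hyx : y < x + n) : (x : Fin n) ≠ y := fun heq => by
    have hmod := (CharP.natCast_eq_natCast (Fin n) n).1 heq
    have := (Nat.modEq_iff_dvd' hxy.le).1 hmod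
    exact absurd (Nat.le_of_dvd (by omega) this) (by omega)
  refine h.disjoint_segment ?_ ?_ ?_
  · simpa using hne (show i < j by omega) (by omega)
  · simpa [add_assoc, eq_comm] using hne hij (by omega)
  · simpa [add_assoc] using hne (show i < j + 1 by omega) hji

open scoped Fin.CommRing in
theorem sum_ang_edges (h : IsSimplePolygon v) (hccw : IsCCW v) :
    ∑ i, ang (v (i + 1) - v i) (v (i + 1 + 1) - v (i + 1)) = 1 := by
  obtain ⟨q, hq⟩ := Finite.exists_max fun i => dot2 (v i) (v i)
  have hn := h.1
  obtain ⟨m, hm⟩ : ∃ m, n = m + 2 := ⟨n - 2, by omega⟩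
  have hn0 : ((m : Fin n) + 2) = 0 := by
    rw [← Nat.cast_ofNat, ← Nat.cast_add, ← hm, CharP.cast_eq_zero]
  let V (k : ℕ) : Pt := v (q + k)
  have hsucc (k : ℕ) : V (k + 1) = v (q + k + 1) := by simp only [V, Nat.cast_succ, add_assoc]
  have hzero : V 0 = v q := by simp only [V, Nat.cast_zero, add_zero]
  have hsum : ∑ i ∈ range (m + 2), extAng V i = 1 := by
    refine sum_extAng_eq_one (w := -v q) (by omega) (fun k => ?_) (fun i => ?_)
      (fun i j hij hj => ?_) (fun j hj => ?_) ?_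
    · simp only [V, Nat.cast_add, Nat.cast_ofNat, hn0, add_zero]
    · simpa only [V, Nat.cast_add, Nat.cast_one, Nat.cast_ofNat, add_assoc, one_add_one_eq_two]
        using h.exists_dot2_edges_pos (q + i)
    · rw [hsucc, hsucc]
      exact h.disjoint_segment_natCast q hij (by omega)
    · rw [dot2_neg_left, neg_pos, hzero, dot2_sub_right, sub_neg]
      refine dot2_lt_dot2_self (fun heq => ?_) (hq _)
      have := h.2.1 heq
      rw [add_eq_left, CharP.cast_eq_zero_iff (Fin n) n] at this
      exact absurd (Nat.le_of_dvd j.succ_pos this) (by omega)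
    · have := h.turn_pos_of_forall_dot2_le (i := q - 1) hccw (by rwa [sub_add_cancel])
      rw [turn, sub_add_cancel, ← det2_sub_sub_eq_orient] at this
      have hlast : V (m + 1) = v (q - 1) := by
        simp only [V, Nat.cast_succ]
        rw [eq_neg_of_add_eq_zero_left hn0]
        congr 1
        ring
      have hone : V 1 = v (q + 1) := by simp only [V, Nat.cast_one]
      rwa [hlast, hone, hzero]
  rw [← hm, Finset.sum_range] at hsum
  rw [← hsum, ← Equiv.sum_comp (Equiv.addLeft q)]
  refine sum_congr rfl fun i _ => ?_
  simp only [extAng, V, Equiv.coe_addLeft, Nat.cast_add, Nat.cast_one, Nat.cast_ofNat,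
    Fin.cast_val_eq_self, add_assoc, one_add_one_eq_two]

end IsSimplePolygon

end Umlaufsatz

section ConvexWedges

open Filter Set Topology

variable {a b c p u x : Pt}

lemma ang_nonpos_of_det2_nonpos (ha : 0 < dot2 u a) (hb : 0 < dot2 u b) (h : det2 a b ≤ 0) :
    ang a b ≤ 0 := by
  obtain h | h := h.lt_or_eq
  · exact (ang_neg_of_det2_neg h).le
  have him : (toComplex b / toComplex a).im = 0 := by rw [toComplex_div_im, h, zero_div]
  obtain hre | hre := le_or_gt 0 (toComplex b / toComplex a).re
  · rw [ang, Complex.arg_eq_zero_iff.2 ⟨hre, him⟩, zero_div]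
  · have hhalf : ang a b = 1 / 2 := by
      rw [ang, Complex.arg_eq_pi_iff.2 ⟨hre, him⟩]
      field_simp
    linarith [ang_eq_sub_of_dot2_pos ha hb, abs_lt.1 (abs_ang_lt_quarter ha),
      abs_lt.1 (abs_ang_lt_quarter hb)]

lemma det2_sub_sub_left (a b p : Pt) : det2 (a - p) (b - a) = orient a b p := by
  simp only [det2, orient, Prod.fst_sub, Prod.snd_sub]
  ring

lemma det2_sub_sub_right (a b p : Pt) : det2 (b - p) (b - a) = orient a b p := by
  simp only [det2, orient, Prod.fst_sub, Prod.snd_sub]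
  ring

lemma ang_sub_eq_add_of_orient_ne_zero (h : orient a b p ≠ 0) :
    ang (a - p) (b - a) = ang (a - p) (b - p) + ang (b - p) (b - a) := by
  have hap := det2_sub_sub_left a b p
  have hbp := det2_sub_sub_right a b p
  have hpp := det2_sub_sub a b p
  obtain ⟨k, hk⟩ := exists_ang_eq_add (a := a - p) (b := b - p) (c := b - a)
    (ne_zero_of_det2_ne_zero_left (hap ▸ h)) (ne_zero_of_det2_ne_zero_left (hbp ▸ h))
    (sub_ne_zero.2 fun hba => h (by simp [orient, hba, det2]))
  suffices hk1 : |(k : ℝ)| < 1 by rw [hk, intCast_eq_zero_of_abs_lt_one hk1, add_zero]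
  have hle := ang_le_half
  have hgt := neg_half_lt_ang
  refine abs_lt.2 ?_
  obtain h | h := h.lt_or_gt
  · have h₁ := ang_neg_of_det2_neg (hap.trans_lt h)
    have h₂ := ang_neg_of_det2_neg (hbp.trans_lt h)
    have h₃ := ang_neg_of_det2_neg (hpp.trans_lt h)
    constructor <;> linarith [hgt (a - p) (b - a), hgt (a - p) (b - p), hgt (b - p) (b - a)]
  · have h₁ := ang_pos_of_det2_pos (h.trans_eq hap.symm)
    have h₂ := ang_pos_of_det2_pos (h.trans_eq hbp.symm)
    have h₃ := ang_pos_of_det2_pos (h.trans_eq hpp.symm)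
    constructor <;> linarith [hle (a - p) (b - a), hle (a - p) (b - p), hle (b - p) (b - a)]

lemma exists_int_ang_sub_eq (hfold : ∃ u, 0 < dot2 u (b - a) ∧ 0 < dot2 u (c - b)) (hbp : b - p ≠ 0)
    (hconv : 0 < orient a b c → 0 < orient a b p ∧ 0 < orient b c p) :
    ∃ k : ℤ, ang (b - p) (c - b) = ang (b - p) (b - a) + ang (b - a) (c - b) + k ∧
      0 ≤ k ∧ (orient a b p < 0 → 0 < orient b c p → 0 < k) := by
  obtain ⟨u, hua, huc⟩ := hfold
  obtain ⟨k, hk⟩ := exists_ang_eq_add hbp (ne_zero_of_dot2_ne_zero_right hua.ne')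
    (ne_zero_of_dot2_ne_zero_right huc.ne')
  have hangle : 0 < orient a b c ∨ ang (b - a) (c - b) ≤ 0 := by
    refine (lt_or_ge 0 (orient a b c)).imp_right fun hle => ?_
    exact ang_nonpos_of_det2_nonpos hua huc (by rwa [det2_sub_sub_eq_orient])
  refine ⟨k, hk, ?_, fun hneg hpos => ?_⟩
  · suffices hk1 : (-1 : ℝ) < k from Int.lt_iff_add_one_le.1 (by exact_mod_cast hk1)
    obtain hturn | hturn := hangle
    · have hbc := ang_pos_of_det2_pos ((hconv hturn).2.trans_eq (det2_sub_sub_left b c p).symm)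
      have hlt : ang (b - a) (c - b) < 1 / 2 :=
        ang_lt_half_of_det2_ne_zero (by rw [det2_sub_sub_eq_orient]; exact hturn.ne')
      linarith [ang_le_half (b - p) (b - a)]
    · linarith [ang_le_half (b - p) (b - a), neg_half_lt_ang (b - p) (c - b)]
  · suffices hk0 : (0 : ℝ) < k by exact_mod_cast hk0
    have hturn := hangle.resolve_left fun hturn => hneg.not_gt (hconv hturn).1
    have hab := ang_neg_of_det2_neg ((det2_sub_sub_right a b p).trans_lt hneg)
    have hbc := ang_pos_of_det2_pos (hpos.trans_eq (det2_sub_sub_left b c p).symm)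
    linarith

lemma inter_side_neg_one_nonempty {U : Set Pt} (hU : IsOpen U) (hab : a ≠ b) (hx : x ∈ U)
    (hle : orient a b x ≤ 0) : (U ∩ side (-1) a b).Nonempty := by
  obtain hneg | hzero := hle.lt_or_eq
  · exact ⟨x, hx, mem_side_neg_one.2 hneg⟩
  · have := nhdsWithin_side_neBot hab (neg_ne_zero.2 one_ne_zero) hzero
    exact Filter.nonempty_of_mem
      (inter_mem (mem_nhdsWithin_of_mem_nhds (hU.mem_nhds hx)) self_mem_nhdsWithin)

variable {n : ℕ} [NeZero n] {v : Fin n → Pt} {i : Fin n}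

lemma mem_wedge_add_one_iff : x ∈ Wedge v (i + 1) ↔ 0 < orient (v i) (v (i + 1)) x ∧
    0 < orient (v (i + 1)) (v (i + 1 + 1)) x ∧ x ∈ polyInterior v := by
  have hright : x ∈ Rhp (v (i + 1 + 1)) (v (i + 1)) ↔
      0 < orient (v (i + 1)) (v (i + 1 + 1)) x := by
    rw [orient_swap, neg_pos]
    rfl
  rw [Wedge, mem_inter_iff, mem_inter_iff, and_assoc, hright, add_sub_cancel_right]
  rfl

lemma strictlyConvexAt_add_one_iff : StrictlyConvexAt v (i + 1) ↔ 0 < turn v i := by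
  rw [StrictlyConvexAt, add_sub_cancel_right, det2_sub_sub_eq_orient, turn]

lemma isOpen_wedge (v : Fin n → Pt) (i : Fin n) : IsOpen (Wedge v i) := by
  have hrhp : Rhp (v (i + 1)) (v i) = side (-1) (v (i + 1)) (v i) := by
    ext x
    exact mem_side_neg_one.symm
  have hlhp : Lhp (v (i - 1)) (v i) = side 1 (v (i - 1)) (v i) := by
    ext x
    exact mem_side_one.symm
  rw [Wedge, hlhp, hrhp]
  exact ((isOpen_side _ _ _).inter (isOpen_side _ _ _)).inter (isOpen_polyInterior v)

lemma isOpen_iInter_wedge (v : Fin n → Pt) :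
    IsOpen (⋂ i : Fin n, ⋂ (_ : StrictlyConvexAt v i), Wedge v i) :=
  isOpen_iInter_of_finite fun i => isOpen_iInter_of_finite fun _ => isOpen_wedge v i

namespace IsSimplePolygon

lemma exists_strictlyConvexAt (h : IsSimplePolygon v) (hccw : IsCCW v) :
    ∃ i, StrictlyConvexAt v i := by
  obtain ⟨q, hq⟩ := Finite.exists_max fun i => dot2 (v i) (v i)
  refine ⟨q - 1 + 1, strictlyConvexAt_add_one_iff.2 (h.turn_pos_of_forall_dot2_le hccw ?_)⟩
  rwa [sub_add_cancel]

lemma orient_pos_of_forall_turn_pos (h : IsSimplePolygon v) (hccw : IsCCW v)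
    (hx : x ∈ polyInterior v) (hgen : ∀ i, orient (v i) (v (i + 1)) x ≠ 0)
    (hconv : ∀ i, 0 < turn v i →
      0 < orient (v i) (v (i + 1)) x ∧ 0 < orient (v (i + 1)) (v (i + 1 + 1)) x) (i : Fin n) :
    0 < orient (v i) (v (i + 1)) x := by
  obtain ⟨hxB, hwind⟩ := (h.mem_polyInterior_iff hccw).1 hx
  choose k hk hk0 hkpos using fun i => exists_int_ang_sub_eq (h.exists_dot2_edges_pos i)
    (sub_ne_zero_of_notMem_polyBoundary hxB (i + 1)) (hconv i)
  have hsum : ∑ i, k i = 0 := by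
    have hshift := sum_comp_add_one fun i => ang (v i - x) (v (i + 1) - v i)
    simp only [hk, ang_sub_eq_add_of_orient_ne_zero (hgen _), Finset.sum_add_distrib,
      h.sum_ang_edges hccw] at hshift
    rw [wind] at hwind
    have hsumℝ : ∑ i, (k i : ℝ) = 0 := by linarith
    exact_mod_cast hsumℝ
  have hkzero (i : Fin n) : k i = 0 :=
    (Finset.sum_eq_zero_iff_of_nonneg fun i _ => hk0 i).1 hsum i (Finset.mem_univ i)
  refine (hgen i).lt_or_gt.resolve_left fun hneg => ?_
  have hall := forall_of_imp_add_one (P := fun i => orient (v i) (v (i + 1)) x < 0)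
    (fun i hi => (hgen (i + 1)).lt_or_gt.resolve_right fun hpos =>
      (hkpos i hi hpos).ne' (hkzero i)) hneg
  have hle : wind v x ≤ 0 := Finset.sum_nonpos fun j _ =>
    (ang_neg_of_det2_neg ((det2_sub_sub _ _ _).trans_lt (hall j))).le
  linarith

theorem orient_pos_of_mem_iInter_wedge (h : IsSimplePolygon v) (hccw : IsCCW v)
    (hx : x ∈ ⋂ i : Fin n, ⋂ (_ : StrictlyConvexAt v i), Wedge v i) (i : Fin n) :
    0 < orient (v i) (v (i + 1)) x := by
  by_contra! hle
  obtain ⟨p, ⟨hpI, hps⟩, hgen⟩ := exists_mem_of_ae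
    ((isOpen_iInter_wedge v).inter (isOpen_side (-1) (v i) (v (i + 1))))
    (inter_side_neg_one_nonempty (isOpen_iInter_wedge v) (h.apply_ne_apply_add_one i) hx hle)
    h.ae_orient_edge_ne_zero
  have hmem (j : Fin n) (hj : StrictlyConvexAt v j) : p ∈ Wedge v j := mem_iInter₂.1 hpI j hj
  obtain ⟨j, hj⟩ := h.exists_strictlyConvexAt hccw
  have hpos := h.orient_pos_of_forall_turn_pos hccw (hmem j hj).2 hgen fun i hi =>
    have hwedge := mem_wedge_add_one_iff.1 (hmem (i + 1) (strictlyConvexAt_add_one_iff.2 hi))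
    ⟨hwedge.1, hwedge.2.1⟩
  exact (mem_side_neg_one.1 hps).not_gt (hpos i)

end IsSimplePolygon

end ConvexWedges

section Kernel

open Filter Set Topology

variable {n : ℕ} [NeZero n] {v : Fin n → Pt} {p x : Pt} {i : Fin n}

namespace IsSimplePolygon

lemma segment_subset_polyRegion (h : IsSimplePolygon v) (hccw : IsCCW v)
    (hx : x ∈ polyInterior v) (hpos : ∀ i, 0 < orient (v i) (v (i + 1)) x)
    (hp : p ∈ polyRegion v) (hgen : ∀ j, orient x (v j) p ≠ 0) :
    segment ℝ x p ⊆ polyRegion v := by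
  by_contra! hsub
  obtain ⟨q, hq, hqR⟩ := not_subset.1 hsub
  obtain ⟨z, ⟨hzR, hz⟩, hdisj⟩ :=
    exists_mem_segment_disjoint_openSegment (isClosed_polyRegion v) hqR hp
  rw [disjoint_left] at hdisj
  have hwbtw := (mem_segment_iff_wbtw.1 hq).trans_right_left (mem_segment_iff_wbtw.1 hz)
  have hqz : q ∈ openSegment ℝ z x := by
    rw [openSegment_symm]
    refine mem_openSegment_of_ne_left_right ?_ ?_ hwbtw.mem_segment
    · exact fun hxq => hqR (hxq ▸ .inr hx)
    · exact fun hzq => hqR (hzq ▸ hzR)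
  have hzB : z ∈ polyBoundary v := hzR.resolve_right fun hzI => by
    obtain ⟨y, hy, hyI⟩ :=
      exists_mem_openSegment_of_mem_nhds ((isOpen_polyInterior v).mem_nhds hzI) q
    exact hdisj (openSegment_symm ℝ q z ▸ hy) (.inr hyI)
  have hzx : z ∈ segment ℝ x p :=
    ((mem_segment_iff_wbtw.1 hq).trans_right (mem_segment_iff_wbtw.1 hz)).mem_segment
  have hzv (j : Fin n) : z ≠ v j := by
    have hxj := sub_ne_zero.1 (sub_ne_zero_of_notMem_polyBoundary hx.1 j)
    exact ne_of_mem_segment_of_orient_ne_zero hxj.symm (hgen j) hzx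
  obtain ⟨i, hi⟩ := exists_mem_openSegment_of_mem_polyBoundary hzB hzv
  have hzi := orient_eq_zero_of_mem_openSegment hi
  have hqi : q ∈ side 1 (v i) (v (i + 1)) :=
    mul_orient_pos_of_mem_openSegment (by rw [hzi, mul_zero]) (by rw [one_mul]; exact hpos i) hqz
  obtain ⟨y, hy, hyI⟩ := ((frequently_mem_openSegment_nhdsWithin_side hzi hqi).and_eventually
    (h.eventually_mem_polyInterior hccw hi)).exists
  exact hdisj (openSegment_symm ℝ q z ▸ hy) (.inr hyI)

theorem mem_polyKernel_of_forall_orient_pos (h : IsSimplePolygon v) (hccw : IsCCW v)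
    (hx : x ∈ polyInterior v) (hpos : ∀ i, 0 < orient (v i) (v (i + 1)) x) :
    x ∈ polyKernel v := by
  refine ⟨.inr hx, ?_⟩
  rintro y hy z ⟨α, β, hα, hβ, hαβ, rfl⟩
  by_contra hz
  have hopen : IsOpen {p : Pt | α • x + β • p ∈ (polyRegion v)ᶜ} :=
    (isClosed_polyRegion v).isOpen_compl.preimage (by fun_prop)
  obtain ⟨p, ⟨hpz, hp⟩, hgen⟩ := exists_mem_of_ae (hopen.inter (isOpen_polyInterior v))
    (mem_closure_iff.1 (h.polyRegion_subset_closure_polyInterior hccw hy) _ hopen hz)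
    (ae_forall_orient_ne_zero fun j =>
      (sub_ne_zero.1 (sub_ne_zero_of_notMem_polyBoundary hx.1 j)).symm)
  exact hpz (h.segment_subset_polyRegion hccw hx hpos (.inr hp) hgen ⟨α, β, hα, hβ, hαβ, rfl⟩)

lemma interior_polyKernel_subset (h : IsSimplePolygon v) (hccw : IsCCW v) :
    interior (polyKernel v) ⊆ polyInterior v :=
  h.interior_polyRegion hccw ▸ interior_mono fun _ hx => hx.1

theorem orient_pos_of_mem_interior_polyKernel (h : IsSimplePolygon v) (hccw : IsCCW v)
    (hx : x ∈ interior (polyKernel v)) (i : Fin n) : 0 < orient (v i) (v (i + 1)) x := by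
  by_contra! hle
  obtain ⟨p, hp, hps⟩ :=
    inter_side_neg_one_nonempty isOpen_interior (h.apply_ne_apply_add_one i) hx hle
  have hm := midpoint_mem_openSegment (𝕜 := ℝ) (v i) (v (i + 1))
  set m := midpoint ℝ (v i) (v (i + 1))
  have hmR : m ∈ polyRegion v := .inl (mem_iUnion.2 ⟨i, openSegment_subset_segment _ _ _ hm⟩)
  obtain ⟨y, hy, hyR⟩ := ((frequently_mem_openSegment_nhdsWithin_side
    (orient_eq_zero_of_mem_openSegment hm) hps).and_eventually
      (h.eventually_notMem_polyRegion hccw hm)).exists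
  rw [openSegment_symm] at hy
  exact hyR ((interior_subset hp).2 m hmR (openSegment_subset_segment _ _ _ hy))

end IsSimplePolygon

end Kernel

/-- Equation (5) (eq:kernconv).  For a simple counterclockwise polygon, the interior of
the kernel equals the intersection of the wedges of its strictly convex vertices. -/
theorem interior_kernel_eq_iInter_convex_wedges
    (n : ℕ) [NeZero n] (v : Fin n → Pt)
    (hsimple : IsSimplePolygon v) (hccw : IsCCW v) :
    interior (polyKernel v) =
      ⋂ i : Fin n, ⋂ (_ : StrictlyConvexAt v i), Wedge v i := by
  refine Set.Subset.antisymm (fun x hx => Set.mem_iInter₂.2 fun i _ => ?_)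
    (interior_maximal (fun x hx => ?_) (isOpen_iInter_wedge v))
  · have hpos := hsimple.orient_pos_of_mem_interior_polyKernel hccw hx
    rw [← sub_add_cancel i 1]
    exact mem_wedge_add_one_iff.2
      ⟨hpos _, hpos _, hsimple.interior_polyKernel_subset hccw hx⟩
  · obtain ⟨i, hi⟩ := hsimple.exists_strictlyConvexAt hccw
    exact hsimple.mem_polyKernel_of_forall_orient_pos hccw (Set.mem_iInter₂.1 hx i hi).2
      (hsimple.orient_pos_of_mem_iInter_wedge hccw hx)
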